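/- Let μ be a non-degenerate aperiodic probability measure on Γ with finite second moment, and let ζ := (1/#F)·∑_{x∈Δ}∑_{s∈Γ} μ(s)·α(x,s) ∈ ℝ^m be the drift. Then there exists a symmetric positive-definite m×m real matrix Σ such that: (a) for all v₁, v₂ ∈ ℝ^m and all harmonic decompositions v̂₁ = u₁ + df₁ and v̂₂ = u₂ + df₂, one has ⟨v₁, Σ v₂⟩ = ∑_{x∈Δ}∑_{s∈Γ} c(x,s)·u₁(x,s)·u₂(x,s) − χ(u₁)·χ(u₂); and (b) lim_{n→∞} sup_{γ∈Γ} n^{m/2}·|μ_n(γ) − (1/#F)·ξ_{nΣ}(Φ(γ) − n·ζ)| = 0. -/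

import Mathlib

open scoped BigOperators Classical
open Filter Matrix MeasureTheory

namespace NSVA

noncomputable section

/-- Convolution of two real-valued functions on a group. -/
def conv {G : Type*} [Group G] (μ ν : G → ℝ) : G → ℝ :=
  fun g => ∑' h : G, μ h * ν (h⁻¹ * g)

/-- Convolution powers: `convPow μ 0 = δ_1`, `convPow μ (n+1) = (convPow μ n) * μ`. -/
def convPow {G : Type*} [Group G] (μ : G → ℝ) : ℕ → G → ℝ
  | 0 => fun g => if g = 1 then 1 else 0
  | n + 1 => conv (convPow μ n) μ

/-- A probability measure on a countable set, viewed as a function. -/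
def IsProb {G : Type*} (μ : G → ℝ) : Prop := (∀ g, 0 ≤ μ g) ∧ HasSum μ 1

/-- The support of `μ` generates the group as a semigroup. -/
def Nondeg {G : Type*} [Group G] (μ : G → ℝ) : Prop :=
  ∀ g : G, g ∈ Subsemigroup.closure {x : G | 0 < μ x}

/-- `μ` is aperiodic: `μ_n(1) > 0` for all large enough `n`. -/
def Aperiodic {G : Type*} [Group G] (μ : G → ℝ) : Prop :=
  ∃ N : ℕ, ∀ n : ℕ, N ≤ n → 0 < convPow μ n 1

/-- Total variation distance between two (probability) functions. -/
def tv {Z : Type*} (p q : Z → ℝ) : ℝ := (1 / 2) * ∑' z : Z, |p z - q z|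

/-- Word length with respect to a finite set `S₀`. -/
def wordLength {G : Type*} [Group G] (S₀ : Finset G) (g : G) : ℕ :=
  sInf {n : ℕ | ∃ l : List G, (∀ s ∈ l, s ∈ S₀) ∧ l.length = n ∧ l.prod = g}

/-- Finite second moment with respect to a word metric given by a finite symmetric
generating set. -/
def FinSecondMoment {G : Type*} [Group G] (μ : G → ℝ) : Prop :=
  ∃ S₀ : Finset G, (∀ s ∈ S₀, s⁻¹ ∈ S₀) ∧ Subgroup.closure (S₀ : Set G) = ⊤ ∧
    Summable (fun g : G => (wordLength S₀ g : ℝ) ^ 2 * μ g)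

/-- A group is virtually abelian if it has an abelian subgroup of finite index. -/
def VirtAbelian (G : Type*) [Group G] : Prop :=
  ∃ A : Subgroup G, A.index ≠ 0 ∧ ∀ a b : A, a * b = b * a

/-- The noised measure `π^ρ` on `G × G`. -/
def noised {G : Type*} (μ : G → ℝ) (ρ : ℝ) : G × G → ℝ :=
  fun p => ρ * μ p.1 * μ p.2 + (1 - ρ) * μ p.1 * (if p.1 = p.2 then 1 else 0)

/-- First marginal of a measure on a product. -/
def marg1 {G₁ G₂ : Type*} (ν : G₁ × G₂ → ℝ) : G₁ → ℝ := fun γ₁ => ∑' γ₂ : G₂, ν (γ₁, γ₂)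

/-- Second marginal of a measure on a product. -/
def marg2 {G₁ G₂ : Type*} (ν : G₁ × G₂ → ℝ) : G₂ → ℝ := fun γ₂ => ∑' γ₁ : G₁, ν (γ₁, γ₂)

/-- A system of representatives of the right cosets `Λ\Γ` containing the identity,
together with the representative map `rep`, constant on right cosets. -/
structure RepSystem {Γ : Type*} [Group Γ] (Λ : Subgroup Γ) where
  Δ : Finset Γ
  one_mem : (1 : Γ) ∈ Δ
  rep : Γ → Γ
  rep_mem : ∀ γ : Γ, rep γ ∈ Δ
  rep_spec : ∀ γ : Γ, γ * (rep γ)⁻¹ ∈ Λ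
  rep_idem : ∀ x ∈ Δ, rep x = x
  rep_coset : ∀ γ : Γ, ∀ v ∈ Λ, rep (v * γ) = rep γ

variable {Γ : Type*} [Group Γ] {Λ : Subgroup Γ} {m : ℕ}

/-- The cocycle `α(x,s) = ψ(x·s·(x^s)⁻¹) ∈ ℤ^m`. -/
def cocycle (ψ : Λ ≃* Multiplicative (Fin m → ℤ)) (R : RepSystem Λ) (x s : Γ) : Fin m → ℤ :=
  Multiplicative.toAdd (ψ ⟨x * s * (R.rep (x * s))⁻¹, R.rep_spec (x * s)⟩)

/-- The transfer homomorphism `θ(γ) = ∑_{x∈Δ} α(x,γ)`. -/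
def transfer (ψ : Λ ≃* Multiplicative (Fin m → ℤ)) (R : RepSystem Λ) (γ : Γ) : Fin m → ℤ :=
  ∑ x ∈ R.Δ, cocycle ψ R x γ

/-- `Φ(γ) = ψ(v)` where `γ = v·x`, `v ∈ Λ`, `x ∈ Δ`. -/
def Phi (ψ : Λ ≃* Multiplicative (Fin m → ℤ)) (R : RepSystem Λ) (γ : Γ) : Fin m → ℤ :=
  Multiplicative.toAdd (ψ ⟨γ * (R.rep γ)⁻¹, R.rep_spec γ⟩)

/-- A 1-form on the quotient diagram. -/
def IsOneForm (R : RepSystem Λ) (ω : Γ → Γ → ℝ) : Prop :=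
  ∀ x ∈ R.Δ, ∀ s : Γ, ω (R.rep (x * s)) s⁻¹ = -ω x s

/-- `χ(ω) = ∑_{x∈Δ} ∑_s c(x,s)·ω(x,s)` where `c(x,s) = μ(s)/#F`. -/
def chi (R : RepSystem Λ) (μ : Γ → ℝ) (ω : Γ → Γ → ℝ) : ℝ :=
  ∑ x ∈ R.Δ, ∑' s : Γ, μ s / (Λ.index : ℝ) * ω x s

/-- Square-integrability of a 1-form. -/
def SqInt (R : RepSystem Λ) (μ : Γ → ℝ) (ω : Γ → Γ → ℝ) : Prop :=
  ∀ x ∈ R.Δ, Summable (fun s : Γ => μ s / (Λ.index : ℝ) * ω x s ^ 2)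

/-- Harmonicity of a (square-integrable) 1-form. -/
def Harmonic (R : RepSystem Λ) (μ : Γ → ℝ) (ω : Γ → Γ → ℝ) : Prop :=
  SqInt R μ ω ∧ ∀ x ∈ R.Δ, (∑' s : Γ, μ s * ω x s) = chi R μ ω

/-- The differential `df(x,s) = f(x^s) − f(x)`. -/
def dd (R : RepSystem Λ) (f : Γ → ℝ) : Γ → Γ → ℝ := fun x s => f (R.rep (x * s)) - f x

/-- `(u, f)` is a harmonic decomposition of the 1-form `ω`: `ω = u + df` with `u`
a harmonic 1-form. -/
def IsHarmDecomp (R : RepSystem Λ) (μ : Γ → ℝ) (ω u : Γ → Γ → ℝ) (f : Γ → ℝ) : Prop :=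
  IsOneForm R u ∧ Harmonic R μ u ∧ ∀ x ∈ R.Δ, ∀ s : Γ, ω x s = u x s + dd R f x s

/-- The 1-form `v̂(x,s) = ⟨v, α(x,s)⟩` (standard inner product). -/
def vhat (ψ : Λ ≃* Multiplicative (Fin m → ℤ)) (R : RepSystem Λ) (v : Fin m → ℝ) :
    Γ → Γ → ℝ :=
  fun x s => ∑ i, v i * (cocycle ψ R x s i : ℝ)

/-- The 1-form `v̂(x,s) = B(v, α(x,s))` for a bilinear form `B`. -/
def vhatB (ψ : Λ ≃* Multiplicative (Fin m → ℤ)) (R : RepSystem Λ)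
    (B : (Fin m → ℝ) →ₗ[ℝ] (Fin m → ℝ) →ₗ[ℝ] ℝ) (v : Fin m → ℝ) : Γ → Γ → ℝ :=
  fun x s => B v (fun i => (cocycle ψ R x s i : ℝ))

/-- The drift `ζ = (1/#F)·∑_{x∈Δ}∑_s μ(s)·α(x,s) ∈ ℝ^m`. -/
def drift (ψ : Λ ≃* Multiplicative (Fin m → ℤ)) (R : RepSystem Λ) (μ : Γ → ℝ) : Fin m → ℝ :=
  fun i => (Λ.index : ℝ)⁻¹ * ∑ x ∈ R.Δ, ∑' s : Γ, μ s * (cocycle ψ R x s i : ℝ)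

/-- The covariance pairing `∑_{x,s} c(x,s)·u(x,s)·u'(x,s) − χ(u)·χ(u')`. -/
def cov (R : RepSystem Λ) (μ : Γ → ℝ) (u u' : Γ → Γ → ℝ) : ℝ :=
  (∑ x ∈ R.Δ, ∑' s : Γ, μ s / (Λ.index : ℝ) * (u x s * u' x s)) - chi R μ u * chi R μ u'

/-- The transfer operator `ℒ_v` acting on functions `Δ → ℂ`. -/
def transferOp (ψ : Λ ≃* Multiplicative (Fin m → ℤ)) (R : RepSystem Λ) (μ : Γ → ℝ)
    (v : Fin m → ℝ) (f : Γ → ℂ) : Γ → ℂ :=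
  fun x => ∑' s : Γ, (μ s : ℂ) *
    Complex.exp (2 * Real.pi * Complex.I * ((∑ i, v i * (cocycle ψ R x s i : ℝ)) : ℝ)) *
    f (R.rep (x * s))

/-- The Gaussian density `ξ_A(w)` associated with a (positive-definite) matrix `A`. -/
def gauss {d : ℕ} (A : Matrix (Fin d) (Fin d) ℝ) (w : Fin d → ℝ) : ℝ :=
  (2 * Real.pi) ^ (-(d : ℝ) / 2) * A.det ^ (-(1 : ℝ) / 2) *
    Real.exp (-(w ⬝ᵥ A⁻¹.mulVec w) / 2)

/-- The product representative system for `Λ₁ × Λ₂ ≤ Γ₁ × Γ₂`. -/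
def prodRep {Γ₁ : Type*} [Group Γ₁] {Γ₂ : Type*} [Group Γ₂]
    {Λ₁ : Subgroup Γ₁} {Λ₂ : Subgroup Γ₂}
    (R₁ : RepSystem Λ₁) (R₂ : RepSystem Λ₂) : RepSystem (Λ₁.prod Λ₂) where
  Δ := R₁.Δ ×ˢ R₂.Δ
  one_mem := Finset.mem_product.mpr ⟨R₁.one_mem, R₂.one_mem⟩
  rep := fun p => (R₁.rep p.1, R₂.rep p.2)
  rep_mem := fun p => Finset.mem_product.mpr ⟨R₁.rep_mem p.1, R₂.rep_mem p.2⟩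
  rep_spec := fun p => Subgroup.mem_prod.mpr ⟨R₁.rep_spec p.1, R₂.rep_spec p.2⟩
  rep_idem := fun x hx => by
    rcases Finset.mem_product.mp hx with ⟨h1, h2⟩
    exact Prod.ext_iff.mpr ⟨R₁.rep_idem x.1 h1, R₂.rep_idem x.2 h2⟩
  rep_coset := fun p v hv => by
    rcases Subgroup.mem_prod.mp hv with ⟨h1, h2⟩
    exact Prod.ext_iff.mpr ⟨R₁.rep_coset p.1 v.1 h1, R₂.rep_coset p.2 v.2 h2⟩

/-- The 1-form `𝐯̂(x,s) = ⟨𝐯, α(x,s)⟩` on a product, standard inner product. -/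
def vhat2 {Γ₁ : Type*} [Group Γ₁] {Γ₂ : Type*} [Group Γ₂]
    {Λ₁ : Subgroup Γ₁} {Λ₂ : Subgroup Γ₂} {m₁ m₂ : ℕ}
    (ψ₁ : Λ₁ ≃* Multiplicative (Fin m₁ → ℤ)) (R₁ : RepSystem Λ₁)
    (ψ₂ : Λ₂ ≃* Multiplicative (Fin m₂ → ℤ)) (R₂ : RepSystem Λ₂)
    (v : (Fin m₁ → ℝ) × (Fin m₂ → ℝ)) : (Γ₁ × Γ₂) → (Γ₁ × Γ₂) → ℝ :=
  fun x s => (∑ i, v.1 i * (cocycle ψ₁ R₁ x.1 s.1 i : ℝ)) +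
    ∑ i, v.2 i * (cocycle ψ₂ R₂ x.2 s.2 i : ℝ)

/-- The 1-form `𝐯̂(x,s) = ⟨𝐯, α(x,s)⟩` on a product, orthogonal-sum of the two
bilinear forms `B₁`, `B₂`. -/
def vhatB2 {Γ₁ : Type*} [Group Γ₁] {Γ₂ : Type*} [Group Γ₂]
    {Λ₁ : Subgroup Γ₁} {Λ₂ : Subgroup Γ₂} {m₁ m₂ : ℕ}
    (ψ₁ : Λ₁ ≃* Multiplicative (Fin m₁ → ℤ)) (R₁ : RepSystem Λ₁)
    (B₁ : (Fin m₁ → ℝ) →ₗ[ℝ] (Fin m₁ → ℝ) →ₗ[ℝ] ℝ)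
    (ψ₂ : Λ₂ ≃* Multiplicative (Fin m₂ → ℤ)) (R₂ : RepSystem Λ₂)
    (B₂ : (Fin m₂ → ℝ) →ₗ[ℝ] (Fin m₂ → ℝ) →ₗ[ℝ] ℝ)
    (v : (Fin m₁ → ℝ) × (Fin m₂ → ℝ)) : (Γ₁ × Γ₂) → (Γ₁ × Γ₂) → ℝ :=
  fun x s => B₁ v.1 (fun i => (cocycle ψ₁ R₁ x.1 s.1 i : ℝ)) +
    B₂ v.2 (fun i => (cocycle ψ₂ R₂ x.2 s.2 i : ℝ))

end

/-!
Functions on `Δ` carry the representation of `Γ` induced by a character `v` of `Λ ≅ ℤ^m`, and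
Fourier inversion over the torus recovers `μ_n(γ)` from the matrix entries of the `n`-th power of
`∑ s, μ s • ρ_v(s)`. After recentring by the drift and rescaling `v = t / √n`, these operators are
contractions on a space of fixed finite dimension and converge to the transition matrix of the walk
on `Λ\Γ`, which is doubly stochastic and, by non-degeneracy and aperiodicity, primitive.

The solution `g` of the Poisson equation for the displacement (the harmonic corrector) yields the
approximate eigenvector `e^{-i⟨t, g⟩/√n}` with an eigenvalue that depends on `x ∈ Δ` only at order
`1/n`; a second Poisson equation, at that order, averages it to `1 - ⟨t, Σ t⟩/(2n)`. Hence the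
`n`-th powers converge pointwise in `t` to `e^{-⟨t, Σ t⟩/2}` times the averaging projection. For
large `N`, `μ_N` charges the identity and a loop over each basis vector at each `x`, which bounds
the operator norms by a Gaussian on the whole torus, so dominated convergence gives a bound uniform
in `γ`.
-/

lemma exists_pos_forall_le {ι : Type*} [Finite ι] {f : ι → ℝ} (hf : ∀ i, 0 < f i) :
    ∃ c > 0, ∀ i, c ≤ f i := by
  obtain ⟨⟨c, hc⟩, hcf⟩ := Finite.exists_ge fun i => (⟨f i, hf i⟩ : Set.Ioi (0 : ℝ))
  exact ⟨c, hc, hcf⟩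

section DoublyStochastic

open scoped Topology

variable {ι : Type*} [Fintype ι]

lemma norm_mulVec_le_of_forall_le [Nonempty ι] {Q : Matrix ι ι ℝ} {c : ℝ} (hrow : Q *ᵥ 1 = 1)
    (hc : ∀ x y, c ≤ Q x y) {h : ι → ℝ} (hsum : ∑ x, h x = 0) :
    ‖Q *ᵥ h‖ ≤ (1 - Fintype.card ι * c) * ‖h‖ := by
  refine (pi_norm_le_iff_of_nonempty _).2 fun x => ?_
  have hx : ∑ y, Q x y = 1 := by simpa [mulVec, dotProduct] using congrFun hrow x
  calc ‖(Q *ᵥ h) x‖ = ‖∑ y, (Q x y - c) * h y‖ := by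
        simp [mulVec, dotProduct, sub_mul, Finset.sum_sub_distrib, ← Finset.mul_sum, hsum]
    _ ≤ ∑ y, (Q x y - c) * ‖h‖ := by
        refine norm_sum_le_of_le _ fun y _ => ?_
        rw [norm_mul, Real.norm_of_nonneg (sub_nonneg.2 (hc x y))]
        exact mul_le_mul_of_nonneg_left (norm_le_pi_norm h y) (sub_nonneg.2 (hc x y))
    _ = (1 - Fintype.card ι * c) * ‖h‖ := by
        simp [← Finset.sum_mul, Finset.sum_sub_distrib, hx]

variable [DecidableEq ι] {P : Matrix ι ι ℝ}

lemma pow_mulVec_eq_of_mulVec_eq {h : ι → ℝ} (hfix : P *ᵥ h = h) (n : ℕ) : P ^ n *ᵥ h = h := by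
  induction n with
  | zero => simp
  | succ n ih => rw [pow_succ, ← mulVec_mulVec, hfix, ih]

variable [Nonempty ι]

lemma exists_norm_pow_mulVec_le (hP : P ∈ doublyStochastic ℝ ι) (hprim : P.IsPrimitive) :
    ∃ N : ℕ, ∃ θ : ℝ, 0 ≤ θ ∧ θ < 1 ∧
      ∀ h : ι → ℝ, ∑ x, h x = 0 → ‖P ^ N *ᵥ h‖ ≤ θ * ‖h‖ := by
  obtain ⟨N, -, hN⟩ := hprim.exists_pos_pow
  obtain ⟨c, hc, hcN⟩ := exists_pos_forall_le fun p : ι × ι => hN p.1 p.2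
  have hcard : 0 < Fintype.card ι * c := by positivity
  refine ⟨N, max 0 (1 - Fintype.card ι * c), le_max_left _ _, max_lt one_pos (by linarith),
    fun h hsum => ?_⟩
  refine (norm_mulVec_le_of_forall_le (mulVec_one_of_mem_doublyStochastic (pow_mem hP N))
    (fun x y => hcN (x, y)) hsum).trans ?_
  gcongr
  exact le_max_right _ _

lemma eq_zero_of_mulVec_eq_of_isPrimitive (hP : P ∈ doublyStochastic ℝ ι) (hprim : P.IsPrimitive)
    {h : ι → ℝ} (hsum : ∑ x, h x = 0) (hfix : P *ᵥ h = h) : h = 0 := by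
  obtain ⟨N, θ, -, hθ, hcontr⟩ := exists_norm_pow_mulVec_le hP hprim
  have hle := hcontr h hsum
  rw [pow_mulVec_eq_of_mulVec_eq hfix] at hle
  exact norm_le_zero_iff.1 (by nlinarith [norm_nonneg h])

lemma eq_zero_and_forall_eq_of_sub_mulVec_eq (hP : P ∈ doublyStochastic ℝ ι)
    (hprim : P.IsPrimitive) {h : ι → ℝ} {c : ℝ} (hc : ∀ x, h x - (P *ᵥ h) x = c) :
    c = 0 ∧ ∀ x y, h x = h y := by
  have hcard : (Fintype.card ι : ℝ) ≠ 0 := Nat.cast_ne_zero.2 Fintype.card_ne_zero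
  have hc0 : c = 0 := by
    have hsum := Finset.sum_congr (s₁ := Finset.univ) rfl fun x _ => hc x
    rw [Finset.sum_sub_distrib, sum_mulVec_of_mem_doublyStochastic hP, sub_self, Finset.sum_const,
      nsmul_eq_mul, Finset.card_univ] at hsum
    exact (mul_eq_zero.1 hsum.symm).resolve_left hcard
  set a : ℝ := (Fintype.card ι : ℝ)⁻¹ * ∑ x, h x with ha
  have hcentered : h - a • 1 = 0 := by
    refine eq_zero_of_mulVec_eq_of_isPrimitive hP hprim ?_ ?_
    · simp [ha]
    · rw [mulVec_sub, mulVec_smul, mulVec_one_of_mem_doublyStochastic hP]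
      congr 1
      ext x
      linarith [hc x]
  have hconst (x : ι) : h x = a := by simpa [sub_eq_zero] using congrFun hcentered x
  exact ⟨hc0, fun x y => (hconst x).trans (hconst y).symm⟩

-- `g ↦ g - P g + (∑ g) • 1` is injective, and it preserves the condition `∑ g = 0`.
lemma exists_sub_mulVec_eq (hP : P ∈ doublyStochastic ℝ ι) (hprim : P.IsPrimitive) {h : ι → ℝ}
    (hsum : ∑ x, h x = 0) : ∃ g : ι → ℝ, g - P *ᵥ g = h := by
  let T : (ι → ℝ) →ₗ[ℝ] (ι → ℝ) :=
    LinearMap.id - P.mulVecLin + (∑ x, LinearMap.proj x).smulRight 1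
  have hT (g : ι → ℝ) : T g = g - P *ᵥ g + fun _ => ∑ x, g x := by ext; simp [T]
  have hsum_eq_zero {g : ι → ℝ} (hg : ∑ x, T g x = 0) : ∑ x, g x = 0 := by
    simpa [hT, Finset.sum_add_distrib, Finset.sum_sub_distrib,
      sum_mulVec_of_mem_doublyStochastic hP] using hg
  have hinj : Function.Injective T := by
    refine (injective_iff_map_eq_zero T).2 fun g hg => ?_
    have hg0 : ∑ x, g x = 0 := hsum_eq_zero (by simp [hg])
    refine eq_zero_of_mulVec_eq_of_isPrimitive hP hprim hg0 ?_
    simpa [hT, hg0, sub_eq_zero, eq_comm, ← Pi.zero_def] using hg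
  obtain ⟨g, rfl⟩ := LinearMap.surjective_of_injective hinj h
  exact ⟨g, by simp [hT, hsum_eq_zero hsum, ← Pi.zero_def]⟩

lemma exists_norm_pow_mulVec_lt (hP : P ∈ doublyStochastic ℝ ι) (hprim : P.IsPrimitive)
    {h : ι → ℝ} (hsum : ∑ x, h x = 0) {ε : ℝ} (hε : 0 < ε) : ∃ k : ℕ, ‖P ^ k *ᵥ h‖ < ε := by
  obtain ⟨N, θ, hθ0, hθ1, hcontr⟩ := exists_norm_pow_mulVec_le hP hprim
  have hpow (j : ℕ) : ‖P ^ (N * j) *ᵥ h‖ ≤ θ ^ j * ‖h‖ := by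
    induction j with
    | zero => simp
    | succ j ih =>
      rw [mul_add_one, add_comm, pow_add, ← mulVec_mulVec, pow_succ', mul_assoc]
      refine (hcontr _ ?_).trans (mul_le_mul_of_nonneg_left ih hθ0)
      rw [sum_mulVec_of_mem_doublyStochastic (pow_mem hP _), hsum]
  have hlim : Tendsto (fun j : ℕ => θ ^ j * ‖h‖) atTop (𝓝 0) := by
    simpa using (tendsto_pow_atTop_nhds_zero_of_lt_one hθ0 hθ1).mul_const ‖h‖
  obtain ⟨j, hj⟩ := (hlim.eventually (gt_mem_nhds hε)).exists
  exact ⟨N * j, (hpow j).trans_lt hj⟩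

end DoublyStochastic

section ContractionPowers

open scoped Topology

section

variable {𝕜 E : Type*} [NontriviallyNormedField 𝕜] [NormedAddCommGroup E] [NormedSpace 𝕜 E]

lemma norm_pow_apply_le {M : E →L[𝕜] E} (hM : ‖M‖ ≤ 1) (k : ℕ) (v : E) : ‖(M ^ k) v‖ ≤ ‖v‖ := by
  induction k with
  | zero => simp
  | succ k ih =>
    rw [pow_succ', mul_apply_eq_comp]
    exact (M.le_of_opNorm_le hM _).trans (by rwa [one_mul])

lemma norm_pow_apply_sub_le {M : E →L[𝕜] E} (hM : ‖M‖ ≤ 1) {l : 𝕜} (hl : ‖l‖ ≤ 1) (w : E) (k : ℕ) :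
    ‖(M ^ k) w - l ^ k • w‖ ≤ k * ‖M w - l • w‖ := by
  induction k with
  | zero => simp
  | succ k ih =>
    calc ‖(M ^ (k + 1)) w - l ^ (k + 1) • w‖
        = ‖(M ^ k) (M w - l • w) + l • ((M ^ k) w - l ^ k • w)‖ := by
          rw [pow_succ M, mul_apply_eq_comp, map_sub, map_smul, smul_sub, smul_smul, ← pow_succ']
          abel_nf
      _ ≤ ‖M w - l • w‖ + 1 * (k * ‖M w - l • w‖) := by
          refine (norm_add_le _ _).trans (add_le_add (norm_pow_apply_le hM k _) ?_)
          rw [norm_smul]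
          gcongr
      _ = (k + 1 : ℕ) * ‖M w - l • w‖ := by push_cast; ring

lemma tendsto_pow_apply_zero {α : Type*} {F : Filter α} {M : α → E →L[𝕜] E} (hM : ∀ n, ‖M n‖ ≤ 1)
    {v : α → E} (hv : Tendsto v F (𝓝 0)) (k : α → ℕ) :
    Tendsto (fun n => (M n ^ k n) (v n)) F (𝓝 0) :=
  squeeze_zero_norm (fun n => norm_pow_apply_le (hM n) (k n) (v n))
    (tendsto_zero_iff_norm_tendsto_zero.1 hv)

end

lemma tendsto_pow_apply_of_tendsto_smul_sub {E : Type*} [NormedAddCommGroup E] [NormedSpace ℂ E]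
    {M : ℕ → E →L[ℂ] E} (hM : ∀ n, ‖M n‖ ≤ 1) {w : ℕ → E} {w₀ : E} (hw : Tendsto w atTop (𝓝 w₀))
    {a : ℝ} (ha : 0 ≤ a)
    (hgen : Tendsto (fun n : ℕ => (n : ℂ) • (M n (w n) - w n)) atTop (𝓝 (-(a : ℂ) • w₀))) :
    Tendsto (fun n => (M n ^ n) w₀) atTop (𝓝 (Complex.exp (-a) • w₀)) := by
  set l : ℕ → ℂ := fun n => 1 + -(a : ℂ) / n with hl
  have hl_norm : ∀ᶠ n : ℕ in atTop, ‖l n‖ ≤ 1 := by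
    filter_upwards [tendsto_natCast_atTop_atTop.eventually_ge_atTop a] with n hn
    have hdiv : a / n ≤ 1 := div_le_one_of_le₀ hn n.cast_nonneg
    have hcast : l n = ((1 - a / n : ℝ) : ℂ) := by rw [hl]; push_cast; ring
    rw [hcast, Complex.norm_real, Real.norm_of_nonneg (sub_nonneg.2 hdiv)]
    linarith [show 0 ≤ a / n by positivity]
  have hdefect : Tendsto (fun n : ℕ => (n : ℂ) • (M n (w n) - l n • w n)) atTop (𝓝 0) := by
    have h := hgen.add (hw.const_smul (a : ℂ))
    rw [neg_smul, neg_add_cancel] at h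
    refine h.congr' ?_
    filter_upwards [eventually_ne_atTop 0] with n hn
    have hn' : (n : ℂ) ≠ 0 := by exact_mod_cast hn
    have hnl : (n : ℂ) * l n = n - a := by simp only [hl]; field_simp; ring
    rw [smul_sub, smul_sub, smul_smul, hnl, sub_smul]
    abel
  have hpow : Tendsto (fun n => (M n ^ n) (w n) - l n ^ n • w n) atTop (𝓝 0) := by
    refine squeeze_zero_norm' ?_ (tendsto_zero_iff_norm_tendsto_zero.1 hdefect)
    filter_upwards [hl_norm] with n hn
    simpa [norm_smul] using norm_pow_apply_sub_le (hM n) hn (w n) n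
  have hexp : Tendsto (fun n => l n ^ n • w n) atTop (𝓝 (Complex.exp (-a) • w₀)) :=
    (Complex.tendsto_one_add_div_pow_exp _).smul hw
  have hsub : Tendsto (fun n => (M n ^ n) (w₀ - w n)) atTop (𝓝 0) :=
    tendsto_pow_apply_zero hM (by simpa using hw.const_sub w₀) _
  simpa using (hpow.add hexp).add hsub

end ContractionPowers

section MarkovPerturbation

open scoped Topology

variable {ι : Type*} [Fintype ι] [DecidableEq ι] {P : Matrix ι ι ℝ}
  {M : ℕ → (ι → ℂ) →L[ℂ] (ι → ℂ)}

lemma tendsto_pow_apply_ofReal_comp (hM : ∀ n, ‖M n‖ ≤ 1)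
    (hMP : ∀ h : ι → ℝ, Tendsto (fun n => M n (Complex.ofReal ∘ h)) atTop
      (𝓝 (Complex.ofReal ∘ (P *ᵥ h)))) (k : ℕ) (h : ι → ℝ) :
    Tendsto (fun n => (M n ^ k) (Complex.ofReal ∘ h)) atTop
      (𝓝 (Complex.ofReal ∘ (P ^ k *ᵥ h))) := by
  induction k generalizing h with
  | zero => simp
  | succ k ih =>
    have hsub := tendsto_pow_apply_zero hM (tendsto_sub_nhds_zero_iff.2 (hMP h)) fun _ => k
    simpa [pow_succ, mul_apply_eq_comp] using hsub.add (ih (P *ᵥ h))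

variable [Nonempty ι]

lemma tendsto_pow_apply_of_sum_eq_zero (hP : P ∈ doublyStochastic ℝ ι) (hprim : P.IsPrimitive)
    (hM : ∀ n, ‖M n‖ ≤ 1)
    (hMP : ∀ h : ι → ℝ, Tendsto (fun n => M n (Complex.ofReal ∘ h)) atTop
      (𝓝 (Complex.ofReal ∘ (P *ᵥ h)))) {h : ι → ℝ} (hsum : ∑ x, h x = 0) :
    Tendsto (fun n => (M n ^ n) (Complex.ofReal ∘ h)) atTop (𝓝 0) := by
  refine NormedAddGroup.tendsto_nhds_zero.2 fun ε hε => ?_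
  obtain ⟨k, hk⟩ := exists_norm_pow_mulVec_lt hP hprim hsum hε
  have hnorm : ‖(Complex.ofReal ∘ (P ^ k *ᵥ h) : ι → ℂ)‖ < ε := by
    refine (pi_norm_lt_iff hε).2 fun z => ?_
    rw [Function.comp_apply, Complex.norm_real]
    exact (norm_le_pi_norm (P ^ k *ᵥ h) z).trans_lt hk
  have hlim := (tendsto_pow_apply_ofReal_comp hM hMP k h).norm
  filter_upwards [hlim.eventually (gt_mem_nhds hnorm), eventually_ge_atTop k] with n hn hkn
  have hsplit : M n ^ n = M n ^ (n - k) * M n ^ k := by rw [← pow_add, Nat.sub_add_cancel hkn]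
  rw [hsplit, mul_apply_eq_comp]
  exact (norm_pow_apply_le (hM n) _ _).trans_lt hn

-- The Poisson equation `g - P g = a - b` corrects `e n` at order `1 / n` into an approximate
-- eigenvector of `M n` with the constant eigenvalue `1 - a / n`.
lemma tendsto_pow_apply_one (hP : P ∈ doublyStochastic ℝ ι) (hprim : P.IsPrimitive)
    (hM : ∀ n, ‖M n‖ ≤ 1)
    (hMP : ∀ h : ι → ℝ, Tendsto (fun n => M n (Complex.ofReal ∘ h)) atTop
      (𝓝 (Complex.ofReal ∘ (P *ᵥ h))))
    {e : ℕ → ι → ℂ} (he : Tendsto e atTop (𝓝 1)) {b : ι → ℝ} {a : ℝ} (ha : 0 ≤ a)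
    (hab : ∑ x, b x = Fintype.card ι * a)
    (hMe : Tendsto (fun n : ℕ => (n : ℂ) • (M n (e n) - e n)) atTop
      (𝓝 (-(Complex.ofReal ∘ b)))) :
    Tendsto (fun n => (M n ^ n) 1) atTop (𝓝 (Complex.exp (-a) • 1)) := by
  obtain ⟨g, hg⟩ := exists_sub_mulVec_eq hP hprim (h := fun x => a - b x) (by simp [hab])
  set gc : ι → ℂ := Complex.ofReal ∘ g with hgc
  have hw : Tendsto (fun n : ℕ => e n + (n : ℂ)⁻¹ • gc) atTop (𝓝 1) := by
    simpa using he.add ((tendsto_inv_atTop_nhds_zero_nat (𝕜 := ℂ)).smul_const gc)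
  refine tendsto_pow_apply_of_tendsto_smul_sub hM hw ha ?_
  have hlim : -(Complex.ofReal ∘ b) + (Complex.ofReal ∘ (P *ᵥ g) - gc) = -(a : ℂ) • 1 := by
    ext x
    have hx := congrArg Complex.ofReal (congrFun hg x)
    simp only [Pi.sub_apply, Complex.ofReal_sub] at hx
    simp only [hgc, Pi.add_apply, Pi.neg_apply, Function.comp_apply, Pi.sub_apply, Pi.smul_apply,
      Pi.one_apply, smul_eq_mul]
    linear_combination -hx
  rw [← hlim]
  refine (hMe.add ((hMP g).sub_const gc)).congr' ?_
  filter_upwards [eventually_ne_atTop 0] with n hn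
  have hn' : (n : ℂ) ≠ 0 := by exact_mod_cast hn
  rw [map_add, map_smul, add_sub_add_comm, ← smul_sub, smul_add, smul_inv_smul₀ hn']

lemma tendsto_pow_apply_single (hP : P ∈ doublyStochastic ℝ ι) (hprim : P.IsPrimitive)
    (hM : ∀ n, ‖M n‖ ≤ 1)
    (hMP : ∀ h : ι → ℝ, Tendsto (fun n => M n (Complex.ofReal ∘ h)) atTop
      (𝓝 (Complex.ofReal ∘ (P *ᵥ h))))
    {e : ℕ → ι → ℂ} (he : Tendsto e atTop (𝓝 1)) {b : ι → ℝ} {a : ℝ} (ha : 0 ≤ a)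
    (hab : ∑ x, b x = Fintype.card ι * a)
    (hMe : Tendsto (fun n : ℕ => (n : ℂ) • (M n (e n) - e n)) atTop
      (𝓝 (-(Complex.ofReal ∘ b)))) (x y : ι) :
    Tendsto (fun n => (M n ^ n) (Pi.single y 1) x) atTop
      (𝓝 ((Fintype.card ι : ℂ)⁻¹ * Complex.exp (-a))) := by
  set h : ι → ℝ := Pi.single y 1 - fun _ => (Fintype.card ι : ℝ)⁻¹ with hh
  have hzero := tendsto_pow_apply_of_sum_eq_zero hP hprim hM hMP (h := h) (by simp [hh])
  have hone := (tendsto_pow_apply_one hP hprim hM hMP he ha hab hMe).const_smul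
    (Fintype.card ι : ℂ)⁻¹
  have hdecomp : Complex.ofReal ∘ h + (Fintype.card ι : ℂ)⁻¹ • 1 = Pi.single y 1 := by
    ext z
    simp [hh, Pi.single_apply, apply_ite Complex.ofReal]
  have hsum := tendsto_pi_nhds.1 (hzero.add hone) x
  simp_rw [← map_smul, ← map_add, hdecomp] at hsum
  simpa using hsum

end MarkovPerturbation

section Convolution

lemma norm_smul_le_of_norm_le_one {A : Type*} [SeminormedAddCommGroup A] [NormedSpace ℝ A]
    {r : ℝ} (hr : 0 ≤ r) {a : A} (ha : ‖a‖ ≤ 1) : ‖r • a‖ ≤ r := by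
  rw [norm_smul, Real.norm_of_nonneg hr]
  exact mul_le_of_le_one_right hr ha

lemma summable_norm_smul_of_norm_le_one {A : Type*} [SeminormedAddCommGroup A] [NormedSpace ℝ A]
    {ι : Type*} {ρ : ι → A} (hρ : ∀ a, ‖ρ a‖ ≤ 1) {ν : ι → ℝ} (hν : Summable ν) (hν0 : 0 ≤ ν) :
    Summable fun s => ‖ν s • ρ s‖ :=
  hν.of_nonneg_of_le (fun _ => norm_nonneg _) fun s => norm_smul_le_of_norm_le_one (hν0 s) (hρ s)

variable {Γ : Type*} [Group Γ] {ν μ : Γ → ℝ}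

lemma summable_mul_translate (hν : Summable ν) (hμ : Summable μ) (hν0 : 0 ≤ ν) (hμ0 : 0 ≤ μ) :
    Summable fun p : Γ × Γ => ν p.2 * μ (p.2⁻¹ * p.1) := by
  have h := (hν.mul_of_nonneg hμ hν0 hμ0).prod_symm
  exact h.comp_injective (i := fun p : Γ × Γ => (p.2⁻¹ * p.1, p.2))
    (fun p q hpq => by grind [Prod.ext_iff, mul_right_inj])

lemma conv_nonneg (hν0 : 0 ≤ ν) (hμ0 : 0 ≤ μ) : 0 ≤ conv ν μ := fun _ =>
  tsum_nonneg fun h => mul_nonneg (hν0 h) (hμ0 _)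

lemma summable_conv (hν : Summable ν) (hμ : Summable μ) (hν0 : 0 ≤ ν) (hμ0 : 0 ≤ μ) :
    Summable (conv ν μ) :=
  (summable_mul_translate hν hμ hν0 hμ0).prod

lemma convPow_nonneg (hμ0 : 0 ≤ μ) (n : ℕ) : 0 ≤ convPow μ n := by
  induction n with
  | zero => intro g; simp only [convPow]; split_ifs <;> simp
  | succ n ih => exact conv_nonneg ih hμ0

lemma summable_convPow (hμ : Summable μ) (hμ0 : 0 ≤ μ) (n : ℕ) : Summable (convPow μ n) := by
  induction n with
  | zero => exact (hasSum_ite_eq (1 : Γ) (1 : ℝ)).summable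
  | succ n ih => exact summable_conv ih hμ (convPow_nonneg hμ0 n) hμ0

section Representation

variable {A : Type*} [NormedRing A] [NormedAlgebra ℝ A] [CompleteSpace A]

lemma tsum_conv_smul {ρ : Γ → A} (hρ_mul : ∀ a b, ρ (a * b) = ρ a * ρ b)
    (hρ : ∀ a, ‖ρ a‖ ≤ 1) (hν : Summable ν) (hμ : Summable μ) (hν0 : 0 ≤ ν) (hμ0 : 0 ≤ μ) :
    ∑' s, conv ν μ s • ρ s = (∑' s, ν s • ρ s) * ∑' s, μ s • ρ s := by
  have htrans := summable_mul_translate hν hμ hν0 hμ0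
  have hdouble : Summable fun p : Γ × Γ => (ν p.2 * μ (p.2⁻¹ * p.1)) • ρ p.1 :=
    htrans.of_norm_bounded fun p =>
      norm_smul_le_of_norm_le_one (mul_nonneg (hν0 _) (hμ0 _)) (hρ _)
  have hν_norm := summable_norm_smul_of_norm_le_one hρ hν hν0
  have hμ_norm := summable_norm_smul_of_norm_le_one hρ hμ hμ0
  calc ∑' s, conv ν μ s • ρ s = ∑' s, ∑' h, (ν h * μ (h⁻¹ * s)) • ρ s :=
        tsum_congr fun s => ((htrans.prod_factor s).tsum_smul_const (ρ s)).symm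
    _ = ∑' h, ∑' s, (ν h * μ (h⁻¹ * s)) • ρ s := hdouble.tsum_comm.symm
    _ = ∑' h, ∑' k, (ν h • ρ h) * (μ k • ρ k) := by
        refine tsum_congr fun h => ((Equiv.mulLeft h).tsum_eq _).symm.trans (tsum_congr fun k => ?_)
        simp only [Equiv.coe_mulLeft, inv_mul_cancel_left, hρ_mul, smul_mul_smul_comm]
    _ = (∑' s, ν s • ρ s) * ∑' s, μ s • ρ s := by
        rw [tsum_mul_tsum_of_summable_norm hν_norm hμ_norm,
          (summable_mul_of_summable_norm hν_norm hμ_norm).tsum_prod]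

lemma tsum_convPow_smul {ρ : Γ → A} (hρ_one : ρ 1 = 1) (hρ_mul : ∀ a b, ρ (a * b) = ρ a * ρ b)
    (hρ : ∀ a, ‖ρ a‖ ≤ 1) (hμ : Summable μ) (hμ0 : 0 ≤ μ) (n : ℕ) :
    ∑' s, convPow μ n s • ρ s = (∑' s, μ s • ρ s) ^ n := by
  induction n with
  | zero =>
    rw [pow_zero, tsum_eq_single 1 fun g hg => by simp [convPow, hg]]
    simp [convPow, hρ_one]
  | succ n ih =>
    rw [pow_succ, ← ih]
    exact tsum_conv_smul hρ_mul hρ (summable_convPow hμ hμ0 n) hμ (convPow_nonneg hμ0 n) hμ0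

end Representation

lemma IsProb.convPow (hμ : IsProb μ) (n : ℕ) : IsProb (convPow μ n) := by
  refine ⟨convPow_nonneg hμ.1 n, ?_⟩
  have h := tsum_convPow_smul (A := ℝ) (ρ := fun _ : Γ => 1) rfl (by simp) (by simp)
    hμ.2.summable hμ.1 n
  simp only [smul_eq_mul, mul_one, hμ.2.tsum_eq, one_pow] at h
  exact h ▸ (summable_convPow hμ.2.summable hμ.1 n).hasSum

lemma convPow_one : convPow μ 1 = μ := by
  ext x
  simp only [convPow, conv]
  rw [tsum_eq_single 1 fun y hy => by simp [hy]]
  simp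

lemma exists_pos_of_convPow_succ_pos (hμ0 : 0 ≤ μ) {n : ℕ} {g : Γ}
    (hg : 0 < convPow μ (n + 1) g) : ∃ k, 0 < convPow μ n k ∧ 0 < μ (k⁻¹ * g) := by
  obtain ⟨k, hk⟩ : ∃ k, 0 < convPow μ n k * μ (k⁻¹ * g) := by
    by_contra! hcon
    exact hg.not_ge (tsum_nonpos hcon)
  exact ⟨k, pos_of_mul_pos_left hk (hμ0 _), pos_of_mul_pos_right hk (convPow_nonneg hμ0 n k)⟩

lemma convPow_zero_pos_iff {g : Γ} : 0 < convPow μ 0 g ↔ g = 1 := by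
  by_cases hg : g = 1 <;> simp [convPow, hg]

lemma convPow_add_pos (hμ : Summable μ) (hμ0 : 0 ≤ μ) {a b : ℕ} {g h : Γ}
    (hg : 0 < convPow μ a g) (hh : 0 < convPow μ b h) : 0 < convPow μ (a + b) (g * h) := by
  induction b generalizing h with
  | zero => simpa [convPow_zero_pos_iff.1 hh] using hg
  | succ b ih =>
    obtain ⟨k, hk, hkh⟩ := exists_pos_of_convPow_succ_pos hμ0 hh
    have hpow0 := convPow_nonneg hμ0 (a + b)
    have hsum : Summable fun x => convPow μ (a + b) x * μ (x⁻¹ * (g * h)) :=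
      (summable_mul_translate (summable_convPow hμ hμ0 (a + b)) hμ hpow0 hμ0).prod_factor _
    refine hsum.tsum_pos (fun x => mul_nonneg (hpow0 x) (hμ0 _)) (g * k) (mul_pos (ih hk) ?_)
    simpa [mul_assoc] using hkh

lemma eventually_convPow_pos (hμ : Summable μ) (hμ0 : 0 ≤ μ) (hnd : Nondeg μ) (hap : Aperiodic μ)
    (g : Γ) : ∀ᶠ n in atTop, 0 < convPow μ n g := by
  obtain ⟨k, hk⟩ : ∃ k, 0 < convPow μ k g := by
    refine Subsemigroup.closure_induction (fun x hx => ⟨1, ?_⟩) ?_ (hnd g)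
    · rwa [convPow_one]
    · rintro x y - - ⟨a, ha⟩ ⟨b, hb⟩
      exact ⟨a + b, convPow_add_pos hμ hμ0 ha hb⟩
  obtain ⟨N, hN⟩ := hap
  filter_upwards [eventually_ge_atTop (k + N)] with n hn
  have h := convPow_add_pos hμ hμ0 hk (hN (n - k) (by lia))
  rwa [mul_one, Nat.add_sub_cancel' (by lia)] at h

end Convolution

section Cocycle

variable {Γ : Type*} [Group Γ] {Λ : Subgroup Γ} {m : ℕ}

namespace RepSystem

variable (R : RepSystem Λ)

lemma rep_rep_mul (g s : Γ) : R.rep (R.rep g * s) = R.rep (g * s) := by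
  rw [← R.rep_coset (R.rep g * s) _ (R.rep_spec g)]
  congr 1
  group

/-- The right action `x ↦ x^s` of `Γ` on the set of representatives, i.e. on `Λ\Γ`. -/
def act (x : R.Δ) (s : Γ) : R.Δ := ⟨R.rep (x * s), R.rep_mem _⟩

lemma act_one (x : R.Δ) : R.act x 1 = x := Subtype.ext (by simp [act, R.rep_idem])

lemma act_mul (x : R.Δ) (s t : Γ) : R.act x (s * t) = R.act (R.act x s) t :=
  Subtype.ext (by simp [act, R.rep_rep_mul, mul_assoc])

lemma act_eq_iff (x y : R.Δ) (s : Γ) : R.act x s = y ↔ x = R.act y s⁻¹ := by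
  constructor
  · rintro rfl; rw [← act_mul, mul_inv_cancel, act_one]
  · rintro rfl; rw [← act_mul, inv_mul_cancel, act_one]

lemma act_inv_mul (x y : R.Δ) : R.act x ((x : Γ)⁻¹ * y) = y :=
  Subtype.ext (by simp [act, R.rep_idem])

lemma act_conj (x : R.Δ) (v : Λ) : R.act x ((x : Γ)⁻¹ * v * x) = x :=
  Subtype.ext (by simp [act, mul_assoc, R.rep_coset x v v.2, R.rep_idem])

/-- The representative of the coset `Λ` itself. -/
def base : R.Δ := ⟨1, R.one_mem⟩

instance : Nonempty R.Δ := ⟨R.base⟩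

-- Inversion turns the right cosets represented by `Δ` into the left cosets counted by the index.
lemma card_eq_index : Fintype.card R.Δ = Λ.index := by
  rw [← Nat.card_eq_fintype_card, Subgroup.index]
  refine Nat.card_congr
    (Equiv.ofBijective (fun x : R.Δ => QuotientGroup.mk (s := Λ) (x : Γ)⁻¹) ⟨?_, ?_⟩)
  · intro x y hxy
    have hmem : (x : Γ) * (y : Γ)⁻¹ ∈ Λ := by simpa using QuotientGroup.eq.1 hxy
    have hrep := R.rep_coset y _ hmem
    rw [inv_mul_cancel_right, R.rep_idem x x.2, R.rep_idem y y.2] at hrep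
    exact Subtype.ext hrep
  · refine QuotientGroup.mk_surjective.forall.2 fun g => ⟨⟨R.rep g⁻¹, R.rep_mem _⟩, ?_⟩
    refine QuotientGroup.eq.2 ?_
    simpa using inv_mem (R.rep_spec g⁻¹)

end RepSystem

variable (ψ : Λ ≃* Multiplicative (Fin m → ℤ)) (R : RepSystem Λ)

lemma cocycle_mul (x s t : Γ) :
    cocycle ψ R x (s * t) = cocycle ψ R x s + cocycle ψ R (R.rep (x * s)) t := by
  simp only [cocycle]
  rw [← toAdd_mul, ← map_mul]
  congr 2
  exact Subtype.ext (by simp [R.rep_rep_mul, mul_assoc])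

lemma cocycle_one (x : R.Δ) : cocycle ψ R x 1 = 0 := by
  have hone : (⟨(x : Γ) * 1 * (R.rep (x * 1))⁻¹, R.rep_spec (x * 1)⟩ : Λ) = 1 :=
    Subtype.ext (by simp [R.rep_idem])
  rw [cocycle, hone, map_one, toAdd_one]

lemma cocycle_conj (x : R.Δ) (v : Λ) :
    cocycle ψ R x ((x : Γ)⁻¹ * v * x) = Multiplicative.toAdd (ψ v) := by
  have hrep : R.rep (x * ((x : Γ)⁻¹ * v * x)) = x := congrArg Subtype.val (R.act_conj x v)
  rw [cocycle]
  congr 2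
  exact Subtype.ext (by simp only [hrep]; group)

lemma vhat_mul (v : Fin m → ℝ) (x : R.Δ) (s t : Γ) :
    vhat ψ R v x (s * t) = vhat ψ R v x s + vhat ψ R v (R.act x s) t := by
  simp [vhat, cocycle_mul, RepSystem.act, mul_add, Finset.sum_add_distrib]

lemma vhat_one (v : Fin m → ℝ) (x : R.Δ) : vhat ψ R v x 1 = 0 := by
  simp [vhat, cocycle_one]

lemma exists_list_length_eq_wordLength {S₀ : Finset Γ} (hsymm : ∀ s ∈ S₀, s⁻¹ ∈ S₀)
    (hgen : Subgroup.closure (S₀ : Set Γ) = ⊤) (g : Γ) :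
    ∃ l : List Γ, (∀ s ∈ l, s ∈ S₀) ∧ l.length = wordLength S₀ g ∧ l.prod = g := by
  have hg : g ∈ (Subgroup.closure (S₀ : Set Γ)).toSubmonoid := hgen ▸ Subgroup.mem_top g
  rw [Subgroup.closure_toSubmonoid] at hg
  obtain ⟨l, hl, hprod⟩ := Submonoid.exists_list_of_mem_closure hg
  refine Nat.sInf_mem (s := {n : ℕ | ∃ l : List Γ, (∀ s ∈ l, s ∈ S₀) ∧ l.length = n ∧ l.prod = g})
    ⟨l.length, l, fun s hs => ?_, rfl, hprod⟩
  exact (hl s hs).elim id fun h => by simpa using hsymm _ h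

lemma abs_cocycle_list_prod_le {S : Set Γ} {C : ℝ}
    (hC : ∀ x : R.Δ, ∀ s ∈ S, ∀ i : Fin m, |(cocycle ψ R x s i : ℝ)| ≤ C) {l : List Γ}
    (hl : ∀ s ∈ l, s ∈ S) (x : R.Δ) (i : Fin m) :
    |(cocycle ψ R x l.prod i : ℝ)| ≤ C * l.length := by
  induction l generalizing x with
  | nil => simp [cocycle_one]
  | cons s l ih =>
    have hhead := hC x s (hl s (by simp)) i
    have htail := ih (fun t ht => hl t (by simp [ht])) (R.act x s)
    rw [List.prod_cons, cocycle_mul]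
    push_cast [List.length_cons, Pi.add_apply]
    refine (abs_add_le _ _).trans ?_
    rw [mul_add_one, add_comm]
    exact add_le_add htail hhead

lemma exists_abs_cocycle_le_wordLength {S₀ : Finset Γ} (hsymm : ∀ s ∈ S₀, s⁻¹ ∈ S₀)
    (hgen : Subgroup.closure (S₀ : Set Γ) = ⊤) :
    ∃ C : ℝ, ∀ (x : R.Δ) (g : Γ) (i : Fin m),
      |(cocycle ψ R x g i : ℝ)| ≤ C * wordLength S₀ g := by
  obtain ⟨C, hC⟩ := Finite.exists_le fun p : R.Δ × S₀ × Fin m =>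
    |(cocycle ψ R p.1 p.2.1 p.2.2 : ℝ)|
  refine ⟨C, fun x g i => ?_⟩
  obtain ⟨l, hl, hlen, rfl⟩ := exists_list_length_eq_wordLength hsymm hgen g
  exact hlen ▸ abs_cocycle_list_prod_le (S := S₀) ψ R (fun x s hs i => hC (x, ⟨s, hs⟩, i)) hl x i

lemma summable_mul_cocycle_sq {μ : Γ → ℝ} (hμ0 : 0 ≤ μ) (hmom : FinSecondMoment μ) (x : R.Δ)
    (i : Fin m) : Summable fun s => μ s * (cocycle ψ R x s i : ℝ) ^ 2 := by
  obtain ⟨S₀, hsymm, hgen, hS⟩ := hmom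
  obtain ⟨C, hC⟩ := exists_abs_cocycle_le_wordLength ψ R hsymm hgen
  refine Summable.of_nonneg_of_le (fun s => mul_nonneg (hμ0 s) (sq_nonneg _)) (fun s => ?_)
    (hS.mul_left (C ^ 2))
  calc μ s * (cocycle ψ R x s i : ℝ) ^ 2 ≤ μ s * (C * wordLength S₀ s) ^ 2 :=
        mul_le_mul_of_nonneg_left
          (sq_le_sq' (abs_le.1 (hC x s i)).1 (abs_le.1 (hC x s i)).2) (hμ0 s)
    _ = C ^ 2 * ((wordLength S₀ s : ℝ) ^ 2 * μ s) := by ring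

end Cocycle

section InducedWalk

variable {Γ : Type*} [Group Γ] {Λ : Subgroup Γ} (R : RepSystem Λ) {ν : Γ → ℝ}

/-- The transition matrix of the walk on the representatives (that is, on `Λ\Γ`) whose steps are
distributed according to `ν`. -/
noncomputable def transMat (ν : Γ → ℝ) : Matrix R.Δ R.Δ ℝ :=
  of fun x y => ∑' s, if R.act x s = y then ν s else 0

lemma summable_ite_act (hν : Summable ν) (x y : R.Δ) :
    Summable fun s => if R.act x s = y then ν s else 0 :=
  (hν.indicator {s | R.act x s = y}).congr fun s => by simp [Set.indicator_apply]

lemma hasSum_mul_act (hν : Summable ν) (f : R.Δ → ℝ) (x : R.Δ) :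
    HasSum (fun s => ν s * f (R.act x s)) ((transMat R ν *ᵥ f) x) := by
  have h := hasSum_sum fun y (_ : y ∈ Finset.univ) =>
    (summable_ite_act R hν x y).hasSum.mul_right (f y)
  simpa [ite_mul, mulVec, dotProduct, transMat] using h

lemma transMat_mem_doublyStochastic (hν : IsProb ν) : transMat R ν ∈ doublyStochastic ℝ R.Δ := by
  refine mem_doublyStochastic.2 ⟨fun x y => tsum_nonneg fun s => ?_, ?_, ?_⟩
  · split_ifs
    exacts [hν.1 s, le_rfl]
  · ext x
    simpa [hν.2.tsum_eq] using (hasSum_mul_act R hν.2.summable 1 x).tsum_eq.symm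
  · ext y
    simp only [vecMul, dotProduct, transMat, of_apply, Pi.one_apply, one_mul]
    rw [← Summable.tsum_finsetSum fun x _ => summable_ite_act R hν.2.summable x y]
    simpa [R.act_eq_iff] using hν.2.tsum_eq

lemma le_transMat_act (hν : Summable ν) (hν0 : 0 ≤ ν) (x : R.Δ) (s : Γ) :
    ν s ≤ transMat R ν x (R.act x s) := by
  have h := (summable_ite_act R hν x (R.act x s)).le_tsum s fun t _ => by
    split_ifs
    exacts [hν0 t, le_rfl]
  simpa [transMat] using h

lemma transMat_pow_act_pos (hν : IsProb ν) {n : ℕ} {s : Γ} (hs : 0 < convPow ν n s) (x : R.Δ) :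
    0 < (transMat R ν ^ n) x (R.act x s) := by
  induction n generalizing s with
  | zero => simp [convPow_zero_pos_iff.1 hs, R.act_one]
  | succ n ih =>
    obtain ⟨k, hk, hks⟩ := exists_pos_of_convPow_succ_pos hν.1 hs
    have hP := transMat_mem_doublyStochastic R hν
    have hact : R.act x s = R.act (R.act x k) (k⁻¹ * s) := by
      rw [← R.act_mul, mul_inv_cancel_left]
    rw [pow_succ, mul_apply]
    refine Finset.sum_pos' (fun z _ => mul_nonneg (nonneg_of_mem_doublyStochastic (pow_mem hP n))
      (nonneg_of_mem_doublyStochastic hP)) ⟨R.act x k, Finset.mem_univ _, mul_pos (ih hk) ?_⟩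
    rw [hact]
    exact hks.trans_le (le_transMat_act R hν.2.summable hν.1 _ _)

lemma isPrimitive_transMat (hν : IsProb ν) (hnd : Nondeg ν) (hap : Aperiodic ν) :
    (transMat R ν).IsPrimitive := by
  have hpos : ∀ᶠ n in atTop, ∀ p : R.Δ × R.Δ, 0 < convPow ν n ((p.1 : Γ)⁻¹ * p.2) :=
    eventually_all.2 fun p => eventually_convPow_pos hν.2.summable hν.1 hnd hap _
  obtain ⟨N, hN, hN0⟩ := (hpos.and (eventually_gt_atTop 0)).exists
  refine ⟨fun x y => nonneg_of_mem_doublyStochastic (transMat_mem_doublyStochastic R hν),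
    N, hN0, fun x y => ?_⟩
  simpa [R.act_inv_mul] using transMat_pow_act_pos R hν (hN (x, y)) x

end InducedWalk

section FourierOp

open scoped Topology

variable {Γ : Type*} [Group Γ] {Λ : Subgroup Γ} {m : ℕ}
variable (ψ : Λ ≃* Multiplicative (Fin m → ℤ)) (R : RepSystem Λ)

/-- The representation of `Γ` on functions on `Δ` induced by the character `e^{i⟨v, ·⟩}` of
`Λ ≅ ℤ^m`. -/
noncomputable def monomialRep (v : Fin m → ℝ) (s : Γ) : (R.Δ → ℂ) →L[ℂ] (R.Δ → ℂ) :=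
  ContinuousLinearMap.pi fun x =>
    Complex.exp (vhat ψ R v x s * Complex.I) • ContinuousLinearMap.proj (R.act x s)

/-- The Fourier transform of `ν` at `v` in the representation `monomialRep`: the transfer operator
`ℒ_{v/2π}`, with the factor `2π` absorbed into `v`, as a bounded operator on functions on `Δ`. -/
noncomputable def fourierOp (ν : Γ → ℝ) (v : Fin m → ℝ) : (R.Δ → ℂ) →L[ℂ] (R.Δ → ℂ) :=
  ∑' s, ν s • monomialRep ψ R v s

lemma monomialRep_apply (v : Fin m → ℝ) (s : Γ) (f : R.Δ → ℂ) (x : R.Δ) :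
    monomialRep ψ R v s f x = Complex.exp (vhat ψ R v x s * Complex.I) * f (R.act x s) := rfl

lemma monomialRep_one (v : Fin m → ℝ) : monomialRep ψ R v 1 = 1 := by
  ext f x
  simp [monomialRep_apply, R.act_one, vhat_one]

lemma monomialRep_mul (v : Fin m → ℝ) (s t : Γ) :
    monomialRep ψ R v (s * t) = monomialRep ψ R v s * monomialRep ψ R v t := by
  ext f x
  simp only [mul_apply_eq_comp, monomialRep_apply, R.act_mul, vhat_mul, Complex.ofReal_add, add_mul,
    Complex.exp_add, mul_assoc]

lemma norm_monomialRep_apply_le (v : Fin m → ℝ) (s : Γ) (f : R.Δ → ℂ) (x : R.Δ) :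
    ‖monomialRep ψ R v s f x‖ ≤ ‖f‖ := by
  rw [monomialRep_apply, norm_mul, Complex.norm_exp_ofReal_mul_I, one_mul]
  exact norm_le_pi_norm f _

lemma norm_monomialRep_le (v : Fin m → ℝ) (s : Γ) : ‖monomialRep ψ R v s‖ ≤ 1 :=
  ContinuousLinearMap.opNorm_le_bound _ zero_le_one fun f => by
    rw [one_mul]
    exact (pi_norm_le_iff_of_nonneg (norm_nonneg f)).2 (norm_monomialRep_apply_le ψ R v s f)

lemma norm_fourierOp_le {ν : Γ → ℝ} (hν : IsProb ν) (v : Fin m → ℝ) : ‖fourierOp ψ R ν v‖ ≤ 1 :=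
  tsum_of_norm_bounded hν.2 fun s =>
    norm_smul_le_of_norm_le_one (hν.1 s) (norm_monomialRep_le ψ R v s)

lemma fourierOp_convPow {μ : Γ → ℝ} (hμ : Summable μ) (hμ0 : 0 ≤ μ) (n : ℕ) (v : Fin m → ℝ) :
    fourierOp ψ R (convPow μ n) v = fourierOp ψ R μ v ^ n :=
  tsum_convPow_smul (monomialRep_one ψ R v) (monomialRep_mul ψ R v) (norm_monomialRep_le ψ R v)
    hμ hμ0 n

variable {ν : Γ → ℝ} (hν : Summable ν) (hν0 : 0 ≤ ν)
include hν hν0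

lemma hasSum_fourierOp_apply (v : Fin m → ℝ) (f : R.Δ → ℂ) (x : R.Δ) :
    HasSum (fun s => ν s • monomialRep ψ R v s f x) (fourierOp ψ R ν v f x) := by
  have hsum : Summable fun s => ν s • monomialRep ψ R v s :=
    (summable_norm_smul_of_norm_le_one (norm_monomialRep_le ψ R v) hν hν0).of_norm
  exact Pi.hasSum.1 (hsum.hasSum.mapL (ContinuousLinearMap.apply ℂ (R.Δ → ℂ) f)) x

lemma fourierOp_apply (v : Fin m → ℝ) (f : R.Δ → ℂ) (x : R.Δ) :
    fourierOp ψ R ν v f x =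
      ∑' s, ν s • (Complex.exp (vhat ψ R v x s * Complex.I) * f (R.act x s)) :=
  (hasSum_fourierOp_apply ψ R hν hν0 v f x).tsum_eq.symm

lemma continuous_fourierOp_apply (f : R.Δ → ℂ) (x : R.Δ) :
    Continuous fun v => fourierOp ψ R ν v f x := by
  simp_rw [fourierOp_apply ψ R hν hν0]
  refine continuous_tsum (fun s => ?_) (hν.mul_right ‖f‖) fun s v => ?_
  · simp only [vhat]
    fun_prop
  · rw [norm_smul, Real.norm_of_nonneg (hν0 s)]
    exact mul_le_mul_of_nonneg_left (norm_monomialRep_apply_le ψ R v s f x) (hν0 s)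

lemma fourierOp_zero_ofReal_comp (h : R.Δ → ℝ) :
    fourierOp ψ R ν 0 (Complex.ofReal ∘ h) = Complex.ofReal ∘ (transMat R ν *ᵥ h) := by
  ext x
  simp [fourierOp_apply ψ R hν hν0, ← (hasSum_mul_act R hν h x).tsum_eq, vhat,
    Complex.ofReal_tsum]

end FourierOp

section Domination

lemma norm_one_add_cexp_le {θ : ℝ} (hθ : |θ| ≤ Real.pi) :
    ‖1 + Complex.exp (θ * Complex.I)‖ ≤ 2 - θ ^ 2 / Real.pi ^ 2 := by
  obtain ⟨hθl, hθr⟩ := abs_le.1 hθ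
  have hfactor : 1 + Complex.exp (θ * Complex.I) =
      Complex.exp ((θ / 2 : ℝ) * Complex.I) * (2 * Real.cos (θ / 2) : ℝ) := by
    push_cast
    rw [Complex.two_cos, mul_add, ← Complex.exp_add, ← Complex.exp_add]
    ring_nf
    rw [Complex.exp_zero, add_comm]
  have hcos : 0 ≤ Real.cos (θ / 2) :=
    Real.cos_nonneg_of_neg_pi_div_two_le_of_le (by linarith) (by linarith)
  rw [hfactor, norm_mul, Complex.norm_exp_ofReal_mul_I, one_mul, Complex.norm_real,
    Real.norm_of_nonneg (by positivity)]
  calc 2 * Real.cos (θ / 2) ≤ 2 * (1 - 2 / Real.pi ^ 2 * (θ / 2) ^ 2) := by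
        gcongr
        exact Real.cos_le_one_sub_mul_cos_sq (abs_le.2 ⟨by linarith, by linarith⟩)
    _ = 2 - θ ^ 2 / Real.pi ^ 2 := by field_simp

lemma norm_add_mul_cexp_le {p q r θ : ℝ} (hr : 0 ≤ r) (hp : r ≤ p) (hq : r ≤ q)
    (hθ : |θ| ≤ Real.pi) :
    ‖(p : ℂ) + q * Complex.exp (θ * Complex.I)‖ ≤ p + q - r * (θ ^ 2 / Real.pi ^ 2) := by
  have hsplit : (p : ℂ) + q * Complex.exp (θ * Complex.I) = ((p - r : ℝ) : ℂ) +
      ((q - r : ℝ) : ℂ) * Complex.exp (θ * Complex.I) +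
        (r : ℂ) * (1 + Complex.exp (θ * Complex.I)) := by
    push_cast
    ring
  rw [hsplit]
  refine norm_add₃_le.trans ?_
  rw [norm_mul, norm_mul, Complex.norm_exp_ofReal_mul_I, Complex.norm_real, Complex.norm_real,
    Complex.norm_real, Real.norm_of_nonneg (sub_nonneg.2 hp), Real.norm_of_nonneg (sub_nonneg.2 hq),
    Real.norm_of_nonneg hr]
  linarith [mul_le_mul_of_nonneg_left (norm_one_add_cexp_le hθ) hr]

lemma norm_tsum_smul_le {α E : Type*} [NormedAddCommGroup E] [NormedSpace ℝ E] [CompleteSpace E]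
    {w : α → ℝ} (hw0 : 0 ≤ w) (hw : Summable w) {z : α → E} {B : ℝ} (hz : ∀ s, ‖z s‖ ≤ B)
    {a b : α} (hab : a ≠ b) :
    ‖∑' s, w s • z s‖ ≤ (∑' s, w s) * B - ((w a + w b) * B - ‖w a • z a + w b • z b‖) := by
  have hbound (s : α) : ‖w s • z s‖ ≤ w s * B := by
    rw [norm_smul, Real.norm_of_nonneg (hw0 s)]
    exact mul_le_mul_of_nonneg_left (hz s) (hw0 s)
  have hs : Summable fun s => w s • z s := (hw.mul_right B).of_norm_bounded hbound
  have hrest : ‖∑' s : {s // s ∉ ({a, b} : Finset α)}, w s • z s‖ ≤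
      (∑' s : {s // s ∉ ({a, b} : Finset α)}, w s) * B :=
    tsum_of_norm_bounded ((hw.subtype _).hasSum.mul_right B) fun s => hbound s
  rw [← hs.sum_add_tsum_subtype_compl {a, b}, ← hw.sum_add_tsum_subtype_compl {a, b},
    Finset.sum_pair hab, Finset.sum_pair hab]
  refine (norm_add_le _ _).trans ?_
  linarith

lemma norm_pow_le_mul_exp {A : Type*} [NormedRing A] [NormOneClass A] {a : A} (ha : ‖a‖ ≤ 1)
    {N : ℕ} (hN : 0 < N) {t : ℝ} (ht : 0 ≤ t) (haN : ‖a ^ N‖ ≤ Real.exp (-t)) (n : ℕ) :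
    ‖a ^ n‖ ≤ Real.exp t * Real.exp (-(t * n / N)) := by
  have hquot : (n : ℝ) / N ≤ (n / N : ℕ) + 1 := by
    rw [div_le_iff₀ (by exact_mod_cast hN)]
    have h := (Nat.lt_mul_div_succ n hN).le
    rw [mul_comm] at h
    exact_mod_cast h
  calc ‖a ^ n‖ = ‖(a ^ N) ^ (n / N) * a ^ (n % N)‖ := by
        rw [← pow_mul, ← pow_add, Nat.div_add_mod]
    _ ≤ ‖a ^ N‖ ^ (n / N) * ‖a‖ ^ (n % N) :=
        (norm_mul_le _ _).trans (mul_le_mul (norm_pow_le _ _) (norm_pow_le _ _) (norm_nonneg _)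
          (by positivity))
    _ ≤ Real.exp (-t) ^ (n / N) * 1 := by
        gcongr
        exact pow_le_one₀ (norm_nonneg _) ha
    _ ≤ Real.exp t * Real.exp (-(t * n / N)) := by
        rw [mul_one, ← Real.exp_nat_mul, ← Real.exp_add, Real.exp_le_exp, mul_div_assoc]
        linarith [mul_le_mul_of_nonneg_left hquot ht]

variable {Γ : Type*} [Group Γ] {Λ : Subgroup Γ} {m : ℕ}
variable (ψ : Λ ≃* Multiplicative (Fin m → ℤ)) (R : RepSystem Λ)

/-- The element of `Γ` that fixes `x` and translates by the `i`-th basis vector: a loop at `x` in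
the quotient diagram. -/
noncomputable def basisLoop (x : R.Δ) (i : Fin m) : Γ :=
  (x : Γ)⁻¹ * ψ.symm (Multiplicative.ofAdd (Pi.single i 1)) * x

lemma act_basisLoop (x : R.Δ) (i : Fin m) : R.act x (basisLoop ψ R x i) = x := R.act_conj x _

lemma vhat_basisLoop (v : Fin m → ℝ) (x : R.Δ) (i : Fin m) :
    vhat ψ R v x (basisLoop ψ R x i) = v i := by
  simp [vhat, basisLoop, cocycle_conj, Pi.single_apply]

lemma basisLoop_ne_one (x : R.Δ) (i : Fin m) : basisLoop ψ R x i ≠ 1 := fun h => by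
  have hv := vhat_basisLoop ψ R (fun _ => 1) x i
  rw [h, vhat_one] at hv
  exact zero_ne_one hv

variable {ν : Γ → ℝ} (hν : IsProb ν) {q : ℝ} (hq : 0 ≤ q) (hone : q ≤ ν 1)
include hν hq hone

lemma norm_fourierOp_apply_le {x : R.Δ} {i : Fin m} (hloop : q ≤ ν (basisLoop ψ R x i))
    {v : Fin m → ℝ} (hv : |v i| ≤ Real.pi) (f : R.Δ → ℂ) :
    ‖fourierOp ψ R ν v f x‖ ≤ (1 - q * (v i ^ 2 / Real.pi ^ 2)) * ‖f‖ := by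
  have hpair : ‖ν 1 • monomialRep ψ R v 1 f x +
      ν (basisLoop ψ R x i) • monomialRep ψ R v (basisLoop ψ R x i) f x‖ ≤
        (ν 1 + ν (basisLoop ψ R x i) - q * (v i ^ 2 / Real.pi ^ 2)) * ‖f‖ := by
    have hfactor : ν 1 • monomialRep ψ R v 1 f x +
        ν (basisLoop ψ R x i) • monomialRep ψ R v (basisLoop ψ R x i) f x =
          (ν 1 + ν (basisLoop ψ R x i) * Complex.exp (v i * Complex.I)) * f x := by
      simp only [monomialRep_apply, vhat_one, R.act_one, vhat_basisLoop, act_basisLoop,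
        Complex.real_smul, Complex.ofReal_zero, zero_mul, Complex.exp_zero]
      ring
    rw [hfactor, norm_mul]
    exact mul_le_mul (norm_add_mul_cexp_le hq hone hloop hv) (norm_le_pi_norm f x) (norm_nonneg _)
      ((norm_nonneg _).trans (norm_add_mul_cexp_le hq hone hloop hv))
  rw [← (hasSum_fourierOp_apply ψ R hν.2.summable hν.1 v f x).tsum_eq]
  refine (norm_tsum_smul_le hν.1 hν.2.summable (norm_monomialRep_apply_le ψ R v · f x)
    (basisLoop_ne_one ψ R x i).symm).trans ?_
  rw [hν.2.tsum_eq]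
  linarith

-- The bounds for the `m` coordinates are averaged with the trivial bound by `1`.
lemma norm_fourierOp_le_exp (hloop : ∀ x i, q ≤ ν (basisLoop ψ R x i)) {v : Fin m → ℝ}
    (hv : ∀ i, |v i| ≤ Real.pi) :
    ‖fourierOp ψ R ν v‖ ≤ Real.exp (-(q / (Real.pi ^ 2 * (m + 1)) * ∑ i, v i ^ 2)) := by
  have hcoord (i : Fin m) : ‖fourierOp ψ R ν v‖ ≤ 1 - q * (v i ^ 2 / Real.pi ^ 2) := by
    have happly (f : R.Δ → ℂ) (x : R.Δ) :=
      norm_fourierOp_apply_le ψ R hν hq hone (hloop x i) (hv i) f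
    have hnonneg : 0 ≤ 1 - q * (v i ^ 2 / Real.pi ^ 2) := by
      simpa using (norm_nonneg _).trans (happly 1 (Classical.arbitrary _))
    exact ContinuousLinearMap.opNorm_le_bound _ hnonneg fun f =>
      (pi_norm_le_iff_of_nonempty _).2 (happly f)
  have hsum := (Finset.sum_le_sum fun i (_ : i ∈ Finset.univ) => hcoord i)
  simp only [Finset.sum_const, Finset.card_univ, Fintype.card_fin, nsmul_eq_mul,
    Finset.sum_sub_distrib, ← Finset.mul_sum, ← Finset.sum_div, mul_one] at hsum
  have hm : (0 : ℝ) < m + 1 := by positivity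
  have hlinear : ‖fourierOp ψ R ν v‖ ≤ 1 - q / (Real.pi ^ 2 * (m + 1)) * ∑ i, v i ^ 2 := by
    refine le_of_mul_le_mul_left ?_ hm
    calc (m + 1) * ‖fourierOp ψ R ν v‖ ≤ m - q * ((∑ i, v i ^ 2) / Real.pi ^ 2) + 1 := by
          linarith [norm_fourierOp_le ψ R hν v]
      _ = (m + 1) * (1 - q / (Real.pi ^ 2 * (m + 1)) * ∑ i, v i ^ 2) := by field_simp; ring
  exact hlinear.trans (Real.one_sub_le_exp_neg _)

omit hν hq hone

lemma exists_norm_fourierOp_pow_le {μ : Γ → ℝ} (hμ : IsProb μ) (hnd : Nondeg μ)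
    (hap : Aperiodic μ) :
    ∃ C κ : ℝ, 0 < κ ∧ ∀ (n : ℕ) (v : Fin m → ℝ), (∀ i, |v i| ≤ Real.pi) →
      ‖fourierOp ψ R μ v ^ n‖ ≤ C * Real.exp (-(κ * (n * ∑ i, v i ^ 2))) := by
  have hpos := eventually_convPow_pos hμ.2.summable hμ.1 hnd hap
  obtain ⟨N, hN, hN1, hN0⟩ := ((eventually_all.2 fun p : R.Δ × Fin m =>
    hpos (basisLoop ψ R p.1 p.2)).and ((hpos 1).and (eventually_gt_atTop 0))).exists
  obtain ⟨c, hc, hloop⟩ := exists_pos_forall_le hN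
  set q := min (convPow μ N 1) c
  have hq0 : 0 < q := lt_min hN1 hc
  set κ := q / (Real.pi ^ 2 * (m + 1))
  refine ⟨Real.exp (κ * (m * Real.pi ^ 2)), κ / N, by positivity, fun n v hv => ?_⟩
  have hsq : ∑ i, v i ^ 2 ≤ m * Real.pi ^ 2 := by
    simpa using Finset.sum_le_sum fun i (_ : i ∈ Finset.univ) =>
      sq_le_sq.2 ((hv i).trans (le_abs_self _))
  have hbase : ‖fourierOp ψ R μ v ^ N‖ ≤ Real.exp (-(κ * ∑ i, v i ^ 2)) := by
    rw [← fourierOp_convPow ψ R hμ.2.summable hμ.1]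
    exact norm_fourierOp_le_exp ψ R (hμ.convPow N) hq0.le (min_le_left _ _)
      (fun x i => (min_le_right _ _).trans (hloop (x, i))) hv
  refine (norm_pow_le_mul_exp (norm_fourierOp_le ψ R hμ v) hN0 (by positivity) hbase n).trans ?_
  have hexp : κ * (∑ i, v i ^ 2) * n / N = κ / N * (n * ∑ i, v i ^ 2) := by ring
  rw [hexp]
  gcongr

end Domination

section GaussianFourier

variable {ι : Type*} [Fintype ι]

/-- The characteristic function of the centred Gaussian with covariance matrix `A`. -/
noncomputable def gaussCharFun (A : Matrix ι ι ℝ) (t : ι → ℝ) : ℂ :=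
  (Real.exp (-(t ⬝ᵥ A *ᵥ t) / 2) : ℂ)

lemma dotProduct_transpose_mul_self_mulVec (B : Matrix ι ι ℝ) (v : ι → ℝ) :
    v ⬝ᵥ (Bᵀ * B) *ᵥ v = (B *ᵥ v) ⬝ᵥ (B *ᵥ v) := by
  rw [← mulVec_mulVec, dotProduct_mulVec, vecMul_transpose]

lemma integral_cexp_mul_exp_neg_dotProduct_self (w : ι → ℝ) :
    ∫ v : ι → ℝ, Complex.exp (-(v ⬝ᵥ w : ℝ) * Complex.I) * (Real.exp (-(v ⬝ᵥ v) / 2) : ℂ)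
      = ((2 * Real.pi) ^ ((Fintype.card ι : ℝ) / 2) * Real.exp (-(w ⬝ᵥ w) / 2) : ℝ) := by
  have hexp (v : ι → ℝ) :
      Complex.exp (-(v ⬝ᵥ w : ℝ) * Complex.I) * (Real.exp (-(v ⬝ᵥ v) / 2) : ℂ)
        = Complex.exp (-(1 / 2) * ∑ i, (v i : ℂ) ^ 2 + ∑ i, (-(w i) * Complex.I) * (v i : ℂ)) := by
    rw [Complex.ofReal_exp, ← Complex.exp_add]
    have hlin : ∑ i, -(w i : ℂ) * Complex.I * v i = -(v ⬝ᵥ w : ℝ) * Complex.I := by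
      rw [dotProduct, Complex.ofReal_sum, neg_mul, Finset.sum_mul, ← Finset.sum_neg_distrib]
      exact Finset.sum_congr rfl fun i _ => by push_cast; ring
    have hsq : ∑ i, (v i : ℂ) ^ 2 = (v ⬝ᵥ v : ℝ) := by simp [dotProduct, sq]
    rw [hlin, hsq]
    push_cast
    ring_nf
  have hquad : (∑ i, (-(w i : ℂ) * Complex.I) ^ 2) / (4 * (1 / 2)) = (-(w ⬝ᵥ w) / 2 : ℝ) := by
    have hsq : ∑ i, (-(w i : ℂ) * Complex.I) ^ 2 = -(w ⬝ᵥ w : ℝ) := by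
      simp [mul_pow, dotProduct, ← sq]
    rw [hsq]
    push_cast
    ring
  have hconst : ((Real.pi : ℂ) / (1 / 2)) ^ ((Fintype.card ι : ℂ) / 2)
      = ((2 * Real.pi) ^ ((Fintype.card ι : ℝ) / 2) : ℝ) := by
    rw [Complex.ofReal_cpow (by positivity)]
    push_cast
    ring_nf
  simp_rw [hexp]
  rw [GaussianFourier.integral_cexp_neg_mul_sum_add (by norm_num), hquad, hconst,
    ← Complex.ofReal_exp, ← Complex.ofReal_mul]

variable {A B : Matrix ι ι ℝ}

open scoped MatrixOrder Matrix.Norms.L2Operator in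
lemma exists_eq_transpose_mul_self (hA : A.PosDef) : ∃ B : Matrix ι ι ℝ, A = Bᵀ * B := by
  obtain ⟨B, hB⟩ := CStarAlgebra.nonneg_iff_eq_star_mul_self.1 hA.posSemidef.nonneg
  exact ⟨B, by rw [hB, star_eq_conjTranspose, conjTranspose_eq_transpose_of_trivial]⟩

variable [DecidableEq ι]

lemma transpose_inv_mulVec_dotProduct_mulVec (hB : B.det ≠ 0) (v w : ι → ℝ) :
    (B⁻¹ᵀ *ᵥ w) ⬝ᵥ (B *ᵥ v) = v ⬝ᵥ w := by
  rw [mulVec_transpose, ← dotProduct_mulVec, mulVec_mulVec, nonsing_inv_mul _ hB.isUnit, one_mulVec,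
    dotProduct_comm]

lemma integral_comp_mulVec {E : Type*} [NormedAddCommGroup E] [NormedSpace ℝ E] (hB : B.det ≠ 0)
    (F : (ι → ℝ) → E) : ∫ v, F (B *ᵥ v) = |B.det|⁻¹ • ∫ v, F v := by
  have hemb : MeasurableEmbedding (toLin' B) :=
    ((toLin' B).equivOfDetNeZero (by rwa [LinearMap.det_toLin'])
      ).toContinuousLinearEquiv.toHomeomorph.measurableEmbedding
  have h := hemb.integral_map (μ := volume) F
  rw [Real.map_matrix_volume_pi_eq_smul_volume_pi hB, integral_smul_measure,
    ENNReal.toReal_ofReal (abs_nonneg _), abs_inv] at h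
  exact h.symm

lemma gauss_transpose_mul_self {m : ℕ} (B : Matrix (Fin m) (Fin m) ℝ) (w : Fin m → ℝ) :
    gauss (Bᵀ * B) w = (2 * Real.pi) ^ (-(m : ℝ) / 2) * |B.det|⁻¹ *
      Real.exp (-((B⁻¹ᵀ *ᵥ w) ⬝ᵥ (B⁻¹ᵀ *ᵥ w)) / 2) := by
  rw [gauss, det_mul, det_transpose, ← sq, ← sq_abs, neg_div, neg_div, neg_div,
    Real.rpow_neg (sq_nonneg _), ← Real.sqrt_eq_rpow, Real.sqrt_sq (abs_nonneg _),
    Matrix.mul_inv_rev, ← transpose_nonsing_inv, ← dotProduct_transpose_mul_self_mulVec,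
    transpose_transpose, neg_div]

lemma integral_cexp_mul_gaussCharFun {m : ℕ} {A : Matrix (Fin m) (Fin m) ℝ} (hA : A.PosDef)
    (w : Fin m → ℝ) :
    ∫ v, Complex.exp (-(v ⬝ᵥ w : ℝ) * Complex.I) * gaussCharFun A v =
      ((2 * Real.pi) ^ m * gauss A w : ℝ) := by
  obtain ⟨B, rfl⟩ := exists_eq_transpose_mul_self hA
  have hB : B.det ≠ 0 := fun h => hA.det_pos.ne' (by simp [h])
  simp_rw [gaussCharFun, dotProduct_transpose_mul_self_mulVec,
    ← transpose_inv_mulVec_dotProduct_mulVec hB _ w, dotProduct_comm (B⁻¹ᵀ *ᵥ w)]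
  rw [integral_comp_mulVec hB fun v => Complex.exp (-(v ⬝ᵥ (B⁻¹ᵀ *ᵥ w) : ℝ) * Complex.I)
    * (Real.exp (-(v ⬝ᵥ v) / 2) : ℂ), integral_cexp_mul_exp_neg_dotProduct_self,
    gauss_transpose_mul_self, Complex.real_smul, ← Complex.ofReal_mul, Fintype.card_fin]
  have hpow : (2 * Real.pi) ^ ((m : ℝ) / 2)
      = (2 * Real.pi) ^ m * (2 * Real.pi) ^ (-(m : ℝ) / 2) := by
    rw [← Real.rpow_natCast, ← Real.rpow_add (by positivity)]
    ring_nf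
  rw [hpow]
  ring_nf

lemma integrable_gaussCharFun {m : ℕ} {A : Matrix (Fin m) (Fin m) ℝ} (hA : A.PosDef) :
    Integrable (gaussCharFun A) := by
  have hgauss : 0 < gauss A 0 := by
    rw [gauss]
    have := hA.det_pos
    positivity
  have hintegral := integral_cexp_mul_gaussCharFun hA 0
  simp only [dotProduct_zero, Complex.ofReal_zero, neg_zero, zero_mul, Complex.exp_zero,
    one_mul] at hintegral
  refine Integrable.of_integral_ne_zero ?_
  rw [hintegral]
  exact_mod_cast (mul_pos (by positivity) hgauss).ne'

end GaussianFourier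

section Orthogonality

lemma integral_Ioc_cexp_mul_int (k : ℤ) :
    ∫ t in Set.Ioc (-Real.pi) Real.pi, Complex.exp ((t * k : ℝ) * Complex.I)
      = if k = 0 then ((2 * Real.pi : ℝ) : ℂ) else 0 := by
  rw [← intervalIntegral.integral_of_le (by linarith [Real.pi_pos])]
  split_ifs with hk
  · simp [hk, two_mul]
  · have hrw (t : ℝ) : ((t * k : ℝ) * Complex.I : ℂ) = (k * Complex.I) * t := by push_cast; ring
    have hperiod : Complex.exp (k * Complex.I * Real.pi) =
        Complex.exp (k * Complex.I * (-Real.pi : ℝ)) := by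
      rw [Complex.exp_eq_exp_iff_exists_int]
      exact ⟨k, by push_cast; ring⟩
    simp_rw [hrw]
    rw [integral_exp_mul_complex (mul_ne_zero (Int.cast_ne_zero.2 hk) Complex.I_ne_zero), hperiod,
      sub_self, zero_div]

lemma setIntegral_pi_Ioc_cexp_dotProduct_int {ι : Type*} [Fintype ι] (k : ι → ℤ) :
    ∫ v in Set.univ.pi fun _ : ι => Set.Ioc (-Real.pi) Real.pi,
        Complex.exp ((∑ i, v i * k i : ℝ) * Complex.I)
      = if k = 0 then (((2 * Real.pi) ^ Fintype.card ι : ℝ) : ℂ) else 0 := by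
  simp_rw [Complex.ofReal_sum, Finset.sum_mul, Complex.exp_sum]
  rw [volume_pi, Measure.restrict_pi_pi, integral_fintype_prod_eq_prod
    (f := fun i (t : ℝ) => Complex.exp ((t * k i : ℝ) * Complex.I))]
  simp_rw [integral_Ioc_cexp_mul_int]
  split_ifs with hk
  · simp [hk]
  · obtain ⟨i, hi⟩ := Function.ne_iff.1 hk
    exact Finset.prod_eq_zero (Finset.mem_univ i) (if_neg hi)

end Orthogonality

section SquareSummable

variable {α ι : Type*} {μ : α → ℝ} {f g : α → ℝ}

lemma summable_mul_mul_of_summable_mul_sq (hμ : 0 ≤ μ) (hf : Summable fun s => μ s * f s ^ 2)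
    (hg : Summable fun s => μ s * g s ^ 2) : Summable fun s => μ s * (f s * g s) := by
  refine Summable.of_norm_bounded (hf.add hg) fun s => ?_
  rw [norm_mul, Real.norm_of_nonneg (hμ s), ← mul_add, Real.norm_eq_abs, abs_mul]
  refine mul_le_mul_of_nonneg_left ?_ (hμ s)
  nlinarith [two_mul_le_add_sq |f s| |g s|, sq_abs (f s), sq_abs (g s), abs_nonneg (f s),
    mul_nonneg (abs_nonneg (f s)) (abs_nonneg (g s))]

lemma summable_mul_add_sq (hμ : 0 ≤ μ) (hf : Summable fun s => μ s * f s ^ 2)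
    (hg : Summable fun s => μ s * g s ^ 2) : Summable fun s => μ s * (f s + g s) ^ 2 := by
  refine ((hf.add hg).add
    ((summable_mul_mul_of_summable_mul_sq hμ hf hg).mul_left 2)).congr fun s => ?_
  ring

lemma summable_mul_sum_sq (hμ : 0 ≤ μ) (t : Finset ι) {f : ι → α → ℝ}
    (hf : ∀ i ∈ t, Summable fun s => μ s * f i s ^ 2) :
    Summable fun s => μ s * (∑ i ∈ t, f i s) ^ 2 := by
  induction t using Finset.induction_on with
  | empty => simp [summable_zero]
  | insert i t hi ih =>
    simp only [Finset.sum_insert hi]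
    exact summable_mul_add_sq hμ (hf i (t.mem_insert_self i)) (ih fun j hj =>
      hf j (Finset.mem_insert_of_mem hj))

lemma summable_mul_of_summable_mul_sq (hμs : Summable μ) (hμ : 0 ≤ μ)
    (hf : Summable fun s => μ s * f s ^ 2) : Summable fun s => μ s * f s := by
  simpa using summable_mul_mul_of_summable_mul_sq (g := 1) hμ hf (by simpa using hμs)

end SquareSummable

section Corrector

variable {Γ : Type*} [Group Γ] {Λ : Subgroup Γ} {m : ℕ}
variable (ψ : Λ ≃* Multiplicative (Fin m → ℤ)) (R : RepSystem Λ) (μ : Γ → ℝ)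

/-- The displacement `α(x,s)`, recentred by the drift and corrected by the coboundary of
`g : Δ → ℝ^m`. -/
noncomputable def correctedStep (g : R.Δ → Fin m → ℝ) (x : R.Δ) (s : Γ) : Fin m → ℝ :=
  (fun i => (cocycle ψ R x s i : ℝ)) - drift ψ R μ - (g (R.act x s) - g x)

/-- `g` solves the Poisson equation: the displacements corrected by its coboundary have mean `0` at
every point of `Δ`. -/
def IsCorrector (g : R.Δ → Fin m → ℝ) : Prop :=
  ∀ x i, HasSum (fun s => μ s * correctedStep ψ R μ g x s i) 0

/-- The covariance matrix of the corrected displacements of a random edge of the quotient diagram: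
a uniform `x ∈ Δ` and an independent `s` with distribution `μ`. -/
noncomputable def covMat (g : R.Δ → Fin m → ℝ) : Matrix (Fin m) (Fin m) ℝ :=
  of fun i j => (Fintype.card R.Δ : ℝ)⁻¹ *
    ∑ x, ∑' s, μ s * (correctedStep ψ R μ g x s i * correctedStep ψ R μ g x s j)

variable {ψ R μ}

lemma dotProduct_correctedStep (g : R.Δ → Fin m → ℝ) (v : Fin m → ℝ) (x : R.Δ) (s : Γ) :
    v ⬝ᵥ correctedStep ψ R μ g x s =
      vhat ψ R v x s - v ⬝ᵥ drift ψ R μ - (v ⬝ᵥ g (R.act x s) - v ⬝ᵥ g x) := by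
  rw [correctedStep, dotProduct_sub, dotProduct_sub, dotProduct_sub]
  rfl

lemma exists_isCorrector (hμ : IsProb μ) (hnd : Nondeg μ) (hap : Aperiodic μ)
    (hmom : FinSecondMoment μ) : ∃ g, IsCorrector ψ R μ g := by
  have hcoc (x : R.Δ) (i : Fin m) : Summable fun s => μ s * (cocycle ψ R x s i : ℝ) :=
    summable_mul_of_summable_mul_sq hμ.2.summable hμ.1 (summable_mul_cocycle_sq ψ R hμ.1 hmom x i)
  have hcentered (i : Fin m) :
      ∑ x : R.Δ, (drift ψ R μ i - ∑' s, μ s * (cocycle ψ R x s i : ℝ)) = 0 := by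
    have hcard : (Fintype.card R.Δ : ℝ) ≠ 0 := Nat.cast_ne_zero.2 Fintype.card_ne_zero
    rw [Finset.sum_sub_distrib, drift, ← R.card_eq_index, ← Finset.sum_coe_sort R.Δ,
      Finset.sum_const, Finset.card_univ, nsmul_eq_mul, mul_inv_cancel_left₀ hcard, sub_self]
  choose f hf using fun i => exists_sub_mulVec_eq (transMat_mem_doublyStochastic R hμ)
    (isPrimitive_transMat R hμ hnd hap) (hcentered i)
  refine ⟨fun x i => f i x, fun x i => ?_⟩
  have hsum := ((hcoc x i).hasSum.sub (hasSum_mul_act R hμ.2.summable (f i) x)).add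
    (hμ.2.mul_right (f i x - drift ψ R μ i))
  have hpoisson : f i x - (transMat R μ *ᵥ f i) x =
      drift ψ R μ i - ∑' s, μ s * (cocycle ψ R x s i : ℝ) := congrFun (hf i) x
  have hzero : ∑' s, μ s * (cocycle ψ R x s i : ℝ) - (transMat R μ *ᵥ f i) x +
      1 * (f i x - drift ψ R μ i) = 0 := by linarith
  rw [hzero] at hsum
  refine hsum.congr_fun fun s => ?_
  simp only [correctedStep, Pi.sub_apply]
  ring

lemma summable_mul_dotProduct_correctedStep_sq (hμ : IsProb μ) (hmom : FinSecondMoment μ)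
    (g : R.Δ → Fin m → ℝ) (v : Fin m → ℝ) (x : R.Δ) :
    Summable fun s => μ s * (v ⬝ᵥ correctedStep ψ R μ g x s) ^ 2 := by
  have hvhat : Summable fun s => μ s * vhat ψ R v x s ^ 2 :=
    summable_mul_sum_sq hμ.1 _ fun i _ =>
      ((summable_mul_cocycle_sq ψ R hμ.1 hmom x i).mul_left (v i ^ 2)).congr fun s => by ring
  have hbdd := (hasSum_mul_act R hμ.2.summable
    (fun y => (-(v ⬝ᵥ drift ψ R μ) - (v ⬝ᵥ g y - v ⬝ᵥ g x)) ^ 2) x).summable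
  refine (summable_mul_add_sq hμ.1 hvhat hbdd).congr fun s => ?_
  rw [dotProduct_correctedStep]
  ring

lemma summable_mul_dotProduct_correctedStep_mul (hμ : IsProb μ) (hmom : FinSecondMoment μ)
    (g : R.Δ → Fin m → ℝ) (v w : Fin m → ℝ) (x : R.Δ) :
    Summable fun s => μ s *
      ((v ⬝ᵥ correctedStep ψ R μ g x s) * (w ⬝ᵥ correctedStep ψ R μ g x s)) :=
  summable_mul_mul_of_summable_mul_sq hμ.1
    (summable_mul_dotProduct_correctedStep_sq hμ hmom g v x)
    (summable_mul_dotProduct_correctedStep_sq hμ hmom g w x)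

lemma IsCorrector.hasSum_mul_dotProduct {g : R.Δ → Fin m → ℝ} (hg : IsCorrector ψ R μ g)
    (v : Fin m → ℝ) (x : R.Δ) : HasSum (fun s => μ s * (v ⬝ᵥ correctedStep ψ R μ g x s)) 0 := by
  have h := hasSum_sum fun i (_ : i ∈ Finset.univ) => (hg x i).mul_left (v i)
  simpa only [mul_zero, Finset.sum_const_zero, dotProduct, Finset.mul_sum, mul_left_comm] using h

lemma dotProduct_covMat_mulVec (hμ : IsProb μ) (hmom : FinSecondMoment μ)
    (g : R.Δ → Fin m → ℝ) (v w : Fin m → ℝ) :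
    v ⬝ᵥ covMat ψ R μ g *ᵥ w = (Fintype.card R.Δ : ℝ)⁻¹ * ∑ x, ∑' s, μ s *
      ((v ⬝ᵥ correctedStep ψ R μ g x s) * (w ⬝ᵥ correctedStep ψ R μ g x s)) := by
  have hprod (x : R.Δ) (i j : Fin m) : Summable fun s =>
      μ s * (correctedStep ψ R μ g x s i * correctedStep ψ R μ g x s j) := by
    simpa using summable_mul_dotProduct_correctedStep_mul hμ hmom g
      (Pi.single i 1) (Pi.single j 1) x
  have hexpand (x : R.Δ) := hasSum_sum fun i (_ : i ∈ Finset.univ) =>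
    hasSum_sum fun j (_ : j ∈ Finset.univ) => (hprod x i j).hasSum.mul_left (v i * w j)
  have htsum (x : R.Δ) :
      ∑' s, μ s * ((v ⬝ᵥ correctedStep ψ R μ g x s) * (w ⬝ᵥ correctedStep ψ R μ g x s)) =
        ∑ i, ∑ j, v i * w j *
          ∑' s, μ s * (correctedStep ψ R μ g x s i * correctedStep ψ R μ g x s j) := by
    rw [← (hexpand x).tsum_eq]
    refine tsum_congr fun s => ?_
    rw [dotProduct, dotProduct, Finset.sum_mul_sum, Finset.mul_sum]
    refine Finset.sum_congr rfl fun i _ => ?_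
    rw [Finset.mul_sum]
    exact Finset.sum_congr rfl fun j _ => by ring
  simp_rw [htsum, dotProduct, mulVec, dotProduct, covMat, of_apply]
  rw [Finset.sum_comm, Finset.mul_sum]
  refine Finset.sum_congr rfl fun i _ => ?_
  rw [Finset.sum_comm, Finset.mul_sum, Finset.mul_sum]
  refine Finset.sum_congr rfl fun j _ => ?_
  rw [← Finset.mul_sum]
  ring

lemma covMat_isSymm (g : R.Δ → Fin m → ℝ) : (covMat ψ R μ g).IsSymm := by
  ext i j
  simp only [covMat, transpose_apply, of_apply, mul_comm (correctedStep ψ R μ g _ _ j)]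

-- Comparing `u + df` with the corrected displacement, the function `f - ⟨v, g⟩` satisfies a Poisson
-- equation with constant right-hand side, so it is constant.
lemma chi_eq_and_eq_of_isHarmDecomp (hμ : IsProb μ) (hnd : Nondeg μ) (hap : Aperiodic μ)
    {g : R.Δ → Fin m → ℝ} (hg : IsCorrector ψ R μ g) {v : Fin m → ℝ}
    {u : Γ → Γ → ℝ} {f : Γ → ℝ} (hu : IsHarmDecomp R μ (vhat ψ R v) u f) :
    chi R μ u = v ⬝ᵥ drift ψ R μ ∧
      ∀ (x : R.Δ) s, u x s = v ⬝ᵥ correctedStep ψ R μ g x s + v ⬝ᵥ drift ψ R μ := by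
  set h : R.Δ → ℝ := fun x => f x - v ⬝ᵥ g x with hh
  have hu_eq (x : R.Δ) (s : Γ) : u x s = v ⬝ᵥ correctedStep ψ R μ g x s + v ⬝ᵥ drift ψ R μ
      - (h (R.act x s) - h x) := by
    rw [dotProduct_correctedStep, hu.2.2 x x.2 s, dd]
    simp only [hh, RepSystem.act]
    ring
  have hpoisson (x : R.Δ) : h x - (transMat R μ *ᵥ h) x = chi R μ u - v ⬝ᵥ drift ψ R μ := by
    have hsum := ((hg.hasSum_mul_dotProduct v x).sub (hasSum_mul_act R hμ.2.summable h x)).add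
      (hμ.2.mul_right (v ⬝ᵥ drift ψ R μ + h x))
    rw [← hu.2.1.2 x x.2, tsum_congr fun s => show μ s * u x s = _ by rw [hu_eq],
      (hsum.congr_fun fun s => by ring).tsum_eq]
    ring
  obtain ⟨hchi, hconst⟩ := eq_zero_and_forall_eq_of_sub_mulVec_eq
    (transMat_mem_doublyStochastic R hμ) (isPrimitive_transMat R hμ hnd hap) hpoisson
  refine ⟨sub_eq_zero.1 hchi, fun x s => ?_⟩
  rw [hu_eq, hconst (R.act x s) x, sub_self, sub_zero]

lemma dotProduct_covMat_mulVec_eq_cov (hμ : IsProb μ) (hnd : Nondeg μ) (hap : Aperiodic μ)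
    (hmom : FinSecondMoment μ) {g : R.Δ → Fin m → ℝ} (hg : IsCorrector ψ R μ g)
    {v w : Fin m → ℝ} {u₁ u₂ : Γ → Γ → ℝ} {f₁ f₂ : Γ → ℝ}
    (hu₁ : IsHarmDecomp R μ (vhat ψ R v) u₁ f₁) (hu₂ : IsHarmDecomp R μ (vhat ψ R w) u₂ f₂) :
    v ⬝ᵥ covMat ψ R μ g *ᵥ w = cov R μ u₁ u₂ := by
  have hcard : (Fintype.card R.Δ : ℝ) ≠ 0 := Nat.cast_ne_zero.2 Fintype.card_ne_zero
  obtain ⟨hchi₁, hu₁⟩ := chi_eq_and_eq_of_isHarmDecomp hμ hnd hap hg hu₁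
  obtain ⟨hchi₂, hu₂⟩ := chi_eq_and_eq_of_isHarmDecomp hμ hnd hap hg hu₂
  set p := v ⬝ᵥ drift ψ R μ
  set q := w ⬝ᵥ drift ψ R μ
  have htsum (x : R.Δ) : ∑' s, μ s / (Fintype.card R.Δ : ℝ) * (u₁ x s * u₂ x s) =
      (Fintype.card R.Δ : ℝ)⁻¹ * (∑' s, μ s * ((v ⬝ᵥ correctedStep ψ R μ g x s) *
        (w ⬝ᵥ correctedStep ψ R μ g x s)) + p * q) := by
    have hsum := (((summable_mul_dotProduct_correctedStep_mul (ψ := ψ) hμ hmom g v w x).hasSum.add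
      ((hg.hasSum_mul_dotProduct v x).mul_right q)).add
      ((hg.hasSum_mul_dotProduct w x).mul_right p)).add (hμ.2.mul_right (p * q))
    rw [zero_mul, zero_mul, add_zero, add_zero, one_mul] at hsum
    rw [← (hsum.mul_left (Fintype.card R.Δ : ℝ)⁻¹).tsum_eq]
    refine tsum_congr fun s => ?_
    rw [hu₁, hu₂]
    ring
  rw [dotProduct_covMat_mulVec hμ hmom, cov, ← R.card_eq_index, ← Finset.sum_coe_sort R.Δ, hchi₁,
    hchi₂, Finset.sum_congr rfl fun x _ => htsum x, ← Finset.mul_sum, Finset.sum_add_distrib,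
    Finset.sum_const, Finset.card_univ, nsmul_eq_mul, mul_add, inv_mul_cancel_left₀ hcard,
    add_sub_cancel_right]

lemma vhat_eq_of_convPow_pos (hμ : IsProb μ) {g : R.Δ → Fin m → ℝ} {v : Fin m → ℝ}
    (hv : ∀ x s, 0 < μ s → v ⬝ᵥ correctedStep ψ R μ g x s = 0) {n : ℕ} {s : Γ}
    (hs : 0 < convPow μ n s) (x : R.Δ) :
    vhat ψ R v x s = n * (v ⬝ᵥ drift ψ R μ) + (v ⬝ᵥ g (R.act x s) - v ⬝ᵥ g x) := by
  induction n generalizing s with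
  | zero => simp [convPow_zero_pos_iff.1 hs, vhat_one, R.act_one]
  | succ n ih =>
    obtain ⟨t, ht, hts⟩ := exists_pos_of_convPow_succ_pos hμ.1 hs
    have hstep := hv (R.act x t) _ hts
    have hmul := vhat_mul ψ R v x t (t⁻¹ * s)
    rw [dotProduct_correctedStep, ← R.act_mul, mul_inv_cancel_left] at hstep
    rw [mul_inv_cancel_left] at hmul
    rw [hmul, ih ht]
    push_cast
    linarith

lemma eq_zero_of_dotProduct_correctedStep_eq_zero (hμ : IsProb μ) (hnd : Nondeg μ)
    (hap : Aperiodic μ) {g : R.Δ → Fin m → ℝ} {v : Fin m → ℝ}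
    (hv : ∀ x s, 0 < μ s → v ⬝ᵥ correctedStep ψ R μ g x s = 0) : v = 0 := by
  obtain ⟨x⟩ : Nonempty R.Δ := inferInstance
  have hdrift : v ⬝ᵥ drift ψ R μ = 0 := by
    obtain ⟨N, hN⟩ := hap
    have h₁ := vhat_eq_of_convPow_pos hμ hv (hN N le_rfl) x
    have h₂ := vhat_eq_of_convPow_pos hμ hv (hN (N + 1) N.le_succ) x
    rw [vhat_one, R.act_one] at h₁ h₂
    push_cast at h₂
    linarith
  ext i
  obtain ⟨n, hn⟩ := (eventually_convPow_pos hμ.2.summable hμ.1 hnd hap (basisLoop ψ R x i)).exists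
  simpa [vhat_basisLoop, act_basisLoop, hdrift] using vhat_eq_of_convPow_pos hμ hv hn x

lemma covMat_posDef (hμ : IsProb μ) (hnd : Nondeg μ) (hap : Aperiodic μ)
    (hmom : FinSecondMoment μ) (g : R.Δ → Fin m → ℝ) : (covMat ψ R μ g).PosDef := by
  have hcard : (0 : ℝ) < Fintype.card R.Δ := Nat.cast_pos.2 Fintype.card_pos
  refine PosDef.of_dotProduct_mulVec_pos ?_ fun v hv => ?_
  · rw [IsHermitian, conjTranspose_eq_transpose_of_trivial]
    exact covMat_isSymm g
  rw [star_trivial, dotProduct_covMat_mulVec hμ hmom]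
  have hnonneg (x : R.Δ) (s : Γ) : 0 ≤ μ s *
      ((v ⬝ᵥ correctedStep ψ R μ g x s) * (v ⬝ᵥ correctedStep ψ R μ g x s)) :=
    mul_nonneg (hμ.1 s) (mul_self_nonneg _)
  obtain ⟨x, s, hs, hxs⟩ : ∃ x s, 0 < μ s ∧ v ⬝ᵥ correctedStep ψ R μ g x s ≠ 0 := by
    by_contra! hzero
    exact hv (eq_zero_of_dotProduct_correctedStep_eq_zero hμ hnd hap hzero)
  have htsum := (summable_mul_dotProduct_correctedStep_mul hμ hmom g v v x).tsum_pos (hnonneg x) s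
    (mul_pos hs (mul_self_pos.2 hxs))
  exact mul_pos (inv_pos.2 hcard) (Finset.sum_pos' (fun y _ => tsum_nonneg (hnonneg y))
    ⟨x, Finset.mem_univ x, htsum⟩)

end Corrector

section PointwiseLimit

open scoped Topology

lemma tendsto_inv_sqrt_natCast : Tendsto (fun n : ℕ => (√(n : ℝ))⁻¹) atTop (𝓝 0) :=
  tendsto_inv_atTop_zero.comp (Real.tendsto_sqrt_atTop.comp tendsto_natCast_atTop_atTop)

lemma charFun_sub_isLittleO {P : Measure ℝ} [IsProbabilityMeasure P] (hP : MemLp id 2 P)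
    (hmean : ∫ x, x ∂P = 0) :
    (fun t => charFun P t - (1 - ((t ^ 2 / 2 * ∫ x, x ^ 2 ∂P : ℝ) : ℂ))) =o[𝓝 0] (· ^ 2) := by
  have htaylor := taylor_isLittleO_univ (x₀ := 0) (contDiff_charFun hP)
  simp only [sub_zero] at htaylor
  refine htaylor.congr_left fun t => ?_
  have hpoly := taylorWithinEval_charFun_two_zero aemeasurable_id (by rwa [Measure.map_id]) t
  simp only [Measure.map_id, id, Pi.pow_apply, hmean, Complex.ofReal_zero, zero_mul,
    add_zero] at hpoly
  rw [hpoly]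
  push_cast
  ring

lemma tendsto_mul_charFun_inv_sqrt_sub_one {P : Measure ℝ} [IsProbabilityMeasure P]
    (hP : MemLp id 2 P) (hmean : ∫ x, x ∂P = 0) :
    Tendsto (fun n : ℕ => (n : ℂ) * (charFun P (√n)⁻¹ - 1)) atTop
      (𝓝 (-(1 / 2 * ∫ x, x ^ 2 ∂P : ℝ))) := by
  have hlim := (((charFun_sub_isLittleO hP hmean).comp_tendsto
    tendsto_inv_sqrt_natCast).tendsto_inv_smul_nhds_zero).add_const
      (-(1 / 2 * ∫ x, x ^ 2 ∂P : ℝ) : ℂ)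
  rw [zero_add] at hlim
  refine hlim.congr' ?_
  filter_upwards [eventually_ne_atTop 0] with n hn
  have hsq : (√(n : ℝ))⁻¹ ^ 2 = (n : ℝ)⁻¹ := by rw [inv_pow, Real.sq_sqrt n.cast_nonneg]
  have hn' : (n : ℂ) ≠ 0 := Nat.cast_ne_zero.2 hn
  simp only [Function.comp_apply, hsq, inv_inv, Complex.real_smul]
  push_cast
  field_simp
  ring

lemma tendsto_mul_tsum_smul_cexp_sub_one {α : Type*} [Countable α] {w u : α → ℝ} (hw : IsProb w)
    (hu : Summable fun s => w s * u s ^ 2) (hu0 : HasSum (fun s => w s * u s) 0) :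
    Tendsto (fun n : ℕ => (n : ℂ) *
      (∑' s, w s • Complex.exp (((√n)⁻¹ * u s : ℝ) * Complex.I) - 1)) atTop
      (𝓝 (-(1 / 2 * ∑' s, w s * u s ^ 2 : ℝ))) := by
  set P : Measure ℝ := Measure.sum fun s => ENNReal.ofReal (w s) • Measure.dirac (u s)
  have hintegral {E : Type} [NormedAddCommGroup E] [NormedSpace ℝ E] [FiniteDimensional ℝ E]
      (f : ℝ → E) : ∫ x, f x ∂P = ∑' s, w s • f (u s) := by
    rw [integral_sum_dirac fun _ => ENNReal.ofReal_ne_top]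
    exact tsum_congr fun s => by rw [ENNReal.toReal_ofReal (hw.1 s)]
  have hprob : IsProbabilityMeasure P := ⟨by
    simp [P, ← ENNReal.ofReal_tsum_of_nonneg hw.1 hw.2.summable, hw.2.tsum_eq]⟩
  have hmem : MemLp id 2 P := by
    rw [memLp_two_iff_integrable_sq aestronglyMeasurable_id,
      integrable_sum_dirac_iff fun _ => ENNReal.ofReal_ne_top]
    simpa only [ENNReal.toReal_ofReal (hw.1 _), id, Real.norm_eq_abs, abs_pow, sq_abs] using hu
  have hlim := tendsto_mul_charFun_inv_sqrt_sub_one hmem ((hintegral _).trans hu0.tsum_eq)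
  simpa only [charFun_apply_real, hintegral, smul_eq_mul, Complex.ofReal_mul] using hlim

variable {Γ : Type*} [Group Γ] {Λ : Subgroup Γ} {m : ℕ}
variable (ψ : Λ ≃* Multiplicative (Fin m → ℤ)) (R : RepSystem Λ) (μ : Γ → ℝ)

/-- The Fourier operator at frequency `t` of one step of the walk recentred by the drift and
rescaled by `√n`. -/
noncomputable def scaledOp (n : ℕ) (t : Fin m → ℝ) : (R.Δ → ℂ) →L[ℂ] (R.Δ → ℂ) :=
  Complex.exp (-((√n)⁻¹ * (t ⬝ᵥ drift ψ R μ) : ℝ) * Complex.I) • fourierOp ψ R μ ((√n)⁻¹ • t)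

/-- The unimodular function on `Δ` whose phase is minus the corrector `g`, paired with the
frequency `t` and rescaled by `√n`: an approximate eigenvector of `scaledOp`. -/
noncomputable def correctorPhase (g : R.Δ → Fin m → ℝ) (n : ℕ) (t : Fin m → ℝ) (x : R.Δ) : ℂ :=
  Complex.exp (-((√n)⁻¹ * (t ⬝ᵥ g x) : ℝ) * Complex.I)

variable {ψ R μ}

lemma tendsto_cexp_neg_inv_sqrt_mul (a : ℝ) :
    Tendsto (fun n : ℕ => Complex.exp (-((√n)⁻¹ * a : ℝ) * Complex.I)) atTop (𝓝 1) := by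
  have hcont : Continuous fun r : ℝ => Complex.exp (-(r * a : ℝ) * Complex.I) := by fun_prop
  exact (hcont.tendsto' 0 1 (by simp)).comp tendsto_inv_sqrt_natCast

lemma norm_cexp_neg_mul_I (r : ℝ) : ‖Complex.exp (-(r : ℂ) * Complex.I)‖ = 1 := by
  rw [← Complex.ofReal_neg, Complex.norm_exp_ofReal_mul_I]

lemma norm_scaledOp_le (hμ : IsProb μ) (n : ℕ) (t : Fin m → ℝ) : ‖scaledOp ψ R μ n t‖ ≤ 1 := by
  rw [scaledOp, norm_smul, norm_cexp_neg_mul_I, one_mul]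
  exact norm_fourierOp_le ψ R hμ _

lemma tendsto_scaledOp_ofReal_comp (hμ : IsProb μ) (t : Fin m → ℝ) (h : R.Δ → ℝ) :
    Tendsto (fun n => scaledOp ψ R μ n t (Complex.ofReal ∘ h)) atTop
      (𝓝 (Complex.ofReal ∘ (transMat R μ *ᵥ h))) := by
  have hcont : Continuous fun v => fourierOp ψ R μ v (Complex.ofReal ∘ h) :=
    continuous_pi fun x => continuous_fourierOp_apply ψ R hμ.2.summable hμ.1 _ x
  have ht : Tendsto (fun n : ℕ => (√(n : ℝ))⁻¹ • t) atTop (𝓝 0) := by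
    simpa using tendsto_inv_sqrt_natCast.smul_const t
  have hlim := (tendsto_cexp_neg_inv_sqrt_mul (t ⬝ᵥ drift ψ R μ)).smul ((hcont.tendsto 0).comp ht)
  rwa [one_smul, fourierOp_zero_ofReal_comp ψ R hμ.2.summable hμ.1] at hlim

lemma scaledOp_correctorPhase_apply (hμ : Summable μ) (hμ0 : 0 ≤ μ) (g : R.Δ → Fin m → ℝ) (n : ℕ)
    (t : Fin m → ℝ) (x : R.Δ) :
    scaledOp ψ R μ n t (correctorPhase R g n t) x = correctorPhase R g n t x *
      ∑' s, μ s • Complex.exp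
        (((√n)⁻¹ * (t ⬝ᵥ correctedStep ψ R μ g x s) : ℝ) * Complex.I) := by
  rw [scaledOp, _root_.smul_apply, Pi.smul_apply, fourierOp_apply ψ R hμ hμ0,
    smul_eq_mul, ← tsum_mul_left, ← tsum_mul_left]
  refine tsum_congr fun s => ?_
  have hvhat : vhat ψ R ((√(n : ℝ))⁻¹ • t) x s = (√(n : ℝ))⁻¹ * vhat ψ R t x s := by
    simp only [vhat, Finset.mul_sum, Pi.smul_apply, smul_eq_mul, mul_assoc]
  rw [mul_smul_comm, mul_smul_comm, correctorPhase, correctorPhase, ← Complex.exp_add,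
    ← Complex.exp_add, ← Complex.exp_add, hvhat, dotProduct_correctedStep]
  congr 2
  push_cast
  ring

variable [Countable Γ]

lemma tendsto_smul_scaledOp_sub (hμ : IsProb μ) (hmom : FinSecondMoment μ)
    {g : R.Δ → Fin m → ℝ} (hg : IsCorrector ψ R μ g) (t : Fin m → ℝ) :
    Tendsto (fun n : ℕ => (n : ℂ) •
      (scaledOp ψ R μ n t (correctorPhase R g n t) - correctorPhase R g n t)) atTop
      (𝓝 (-(Complex.ofReal ∘ fun x =>
        1 / 2 * ∑' s, μ s * (t ⬝ᵥ correctedStep ψ R μ g x s) ^ 2))) := by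
  refine tendsto_pi_nhds.2 fun x => ?_
  have hlim := (tendsto_cexp_neg_inv_sqrt_mul (t ⬝ᵥ g x)).mul
    (tendsto_mul_tsum_smul_cexp_sub_one hμ (summable_mul_dotProduct_correctedStep_sq hμ hmom g t x)
      (hg.hasSum_mul_dotProduct t x))
  rw [one_mul] at hlim
  refine hlim.congr fun n => ?_
  rw [Pi.smul_apply, Pi.sub_apply, scaledOp_correctorPhase_apply hμ.2.summable hμ.1, correctorPhase,
    smul_eq_mul]
  ring

lemma tendsto_scaledOp_pow_apply_single (hμ : IsProb μ) (hnd : Nondeg μ) (hap : Aperiodic μ)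
    (hmom : FinSecondMoment μ) {g : R.Δ → Fin m → ℝ} (hg : IsCorrector ψ R μ g)
    (t : Fin m → ℝ) (x y : R.Δ) :
    Tendsto (fun n => (scaledOp ψ R μ n t ^ n) (Pi.single y 1) x) atTop
      (𝓝 ((Fintype.card R.Δ : ℂ)⁻¹ * gaussCharFun (covMat ψ R μ g) t)) := by
  have hcard : (Fintype.card R.Δ : ℝ) ≠ 0 := Nat.cast_ne_zero.2 Fintype.card_ne_zero
  have hnonneg : 0 ≤ t ⬝ᵥ covMat ψ R μ g *ᵥ t := by
    simpa using (covMat_posDef hμ hnd hap hmom g).posSemidef.dotProduct_mulVec_nonneg t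
  have hsum : ∑ x, 1 / 2 * ∑' s, μ s * (t ⬝ᵥ correctedStep ψ R μ g x s) ^ 2 =
      Fintype.card R.Δ * (t ⬝ᵥ covMat ψ R μ g *ᵥ t / 2) := by
    simp_rw [dotProduct_covMat_mulVec hμ hmom, ← Finset.mul_sum, sq]
    field_simp
  have hlim := tendsto_pow_apply_single (transMat_mem_doublyStochastic R hμ)
    (isPrimitive_transMat R hμ hnd hap) (norm_scaledOp_le hμ · t)
    (tendsto_scaledOp_ofReal_comp hμ t)
    (tendsto_pi_nhds.2 fun x => tendsto_cexp_neg_inv_sqrt_mul (t ⬝ᵥ g x))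
    (div_nonneg hnonneg zero_le_two) hsum (tendsto_smul_scaledOp_sub hμ hmom hg t) x y
  rwa [gaussCharFun, neg_div, Complex.ofReal_exp, Complex.ofReal_neg]

end PointwiseLimit

section Inversion

open scoped Topology

variable {Γ : Type*} [Group Γ] {Λ : Subgroup Γ} {m : ℕ}

/-- The fundamental domain `(-π, π]^m` of the torus dual to `ℤ^m`. -/
def cube (m : ℕ) : Set (Fin m → ℝ) := Set.univ.pi fun _ => Set.Ioc (-Real.pi) Real.pi

lemma measurableSet_cube : MeasurableSet (cube m) :=
  MeasurableSet.univ_pi fun _ => measurableSet_Ioc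

lemma volume_cube_ne_top : volume (cube m) ≠ ⊤ := by
  rw [cube, volume_pi_pi]
  exact (ENNReal.prod_lt_top fun _ _ => measure_Ioc_lt_top).ne

lemma cube_mem_nhds_zero : cube m ∈ 𝓝 (0 : Fin m → ℝ) :=
  set_pi_mem_nhds Set.finite_univ fun _ _ =>
    Ioc_mem_nhds (neg_lt_zero.2 Real.pi_pos) Real.pi_pos

variable (ψ : Λ ≃* Multiplicative (Fin m → ℤ)) (R : RepSystem Λ)

lemma cocycle_base (γ : Γ) : cocycle ψ R R.base γ = Phi ψ R γ := by
  simp [cocycle, Phi, RepSystem.base]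

lemma injective_act_base_Phi : Function.Injective fun γ => (R.act R.base γ, Phi ψ R γ) := by
  intro s γ h
  obtain ⟨hact, hPhi⟩ := Prod.mk.inj h
  have hrep : R.rep s = R.rep γ := by
    simpa [RepSystem.act, RepSystem.base] using congrArg Subtype.val hact
  have hmul := congrArg Subtype.val (ψ.injective (Multiplicative.toAdd.injective hPhi))
  simp only [hrep] at hmul
  exact mul_right_cancel hmul

lemma setIntegral_cube_monomialRep (s γ : Γ) :
    ∫ v in cube m, Complex.exp (-(v ⬝ᵥ fun i => (Phi ψ R γ i : ℝ) : ℝ) * Complex.I) *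
      monomialRep ψ R v s (Pi.single (R.act R.base γ) 1) R.base =
        if s = γ then (((2 * Real.pi) ^ m : ℝ) : ℂ) else 0 := by
  by_cases hact : R.act R.base s = R.act R.base γ
  · have hphase (v : Fin m → ℝ) :
        Complex.exp (-(v ⬝ᵥ fun i => (Phi ψ R γ i : ℝ) : ℝ) * Complex.I) *
          monomialRep ψ R v s (Pi.single (R.act R.base γ) 1) R.base =
        Complex.exp ((∑ i, v i * ((Phi ψ R s - Phi ψ R γ) i : ℤ) : ℝ) * Complex.I) := by
      rw [monomialRep_apply, hact, Pi.single_eq_same, mul_one, ← Complex.exp_add, vhat,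
        cocycle_base, dotProduct, ← add_mul, ← Complex.ofReal_neg, ← Complex.ofReal_add,
        neg_add_eq_sub, ← Finset.sum_sub_distrib]
      simp only [Pi.sub_apply, Int.cast_sub, mul_sub]
    have hiff : Phi ψ R s - Phi ψ R γ = 0 ↔ s = γ :=
      ⟨fun h => injective_act_base_Phi ψ R (Prod.ext hact (sub_eq_zero.1 h)),
        fun h => sub_eq_zero.2 (congrArg _ h)⟩
    simp_rw [hphase]
    rw [cube, setIntegral_pi_Ioc_cexp_dotProduct_int, Fintype.card_fin]
    simp only [hiff]
  · have hne : s ≠ γ := fun h => hact (by rw [h])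
    simp only [monomialRep_apply, Pi.single_eq_of_ne hact, mul_zero, integral_zero, if_neg hne]

variable {ν : Γ → ℝ} (hν : Summable ν) (hν0 : 0 ≤ ν)
include hν hν0

lemma setIntegral_cube_fourierOp [Countable Γ] (γ : Γ) :
    ∫ v in cube m, Complex.exp (-(v ⬝ᵥ fun i => (Phi ψ R γ i : ℝ) : ℝ) * Complex.I) *
      fourierOp ψ R ν v (Pi.single (R.act R.base γ) 1) R.base = ((2 * Real.pi) ^ m * ν γ : ℝ) := by
  set e : R.Δ → ℂ := Pi.single (R.act R.base γ) 1
  set E : (Fin m → ℝ) → ℂ := fun v =>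
    Complex.exp (-(v ⬝ᵥ fun i => (Phi ψ R γ i : ℝ) : ℝ) * Complex.I) with hE
  have hbound (s : Γ) (v : Fin m → ℝ) : ‖ν s • (E v * monomialRep ψ R v s e R.base)‖ ≤ ν s := by
    refine norm_smul_le_of_norm_le_one (hν0 s) ?_
    rw [norm_mul, norm_cexp_neg_mul_I, one_mul]
    exact (norm_monomialRep_apply_le ψ R v s e _).trans_eq
      ((Pi.norm_single _).trans norm_one)
  have hcont (s : Γ) : Continuous fun v => ν s • (E v * monomialRep ψ R v s e R.base) := by
    simp only [hE, monomialRep_apply, vhat, dotProduct]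
    fun_prop
  have hsum := hasSum_integral_of_dominated_convergence (μ := volume.restrict (cube m))
    (fun s _ => ν s) (fun s => (hcont s).aestronglyMeasurable)
    (fun s => Eventually.of_forall (hbound s)) (Eventually.of_forall fun _ => hν)
    (integrableOn_const volume_cube_ne_top)
    (Eventually.of_forall fun v => by
      simpa only [mul_smul_comm] using
        (hasSum_fourierOp_apply ψ R hν hν0 v e R.base).mul_left (E v))
  refine hsum.unique ?_
  simp_rw [integral_smul, hE, e, setIntegral_cube_monomialRep]
  refine (hasSum_ite_eq γ (((2 * Real.pi) ^ m * ν γ : ℝ) : ℂ)).congr_fun fun s => ?_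
  split_ifs with h
  · rw [h, Complex.real_smul, ← Complex.ofReal_mul, mul_comm]
  · rw [smul_zero]

end Inversion

section LocalLimit

open scoped Topology

variable {Γ : Type*} [Group Γ] {Λ : Subgroup Γ} {m : ℕ}

lemma integral_comp_inv_sqrt_smul (n : ℕ) (F : (Fin m → ℝ) → ℂ) :
    ∫ t, F ((√(n : ℝ))⁻¹ • t) = ((n : ℝ) ^ ((m : ℝ) / 2) : ℝ) * ∫ v, F v := by
  have hpow : √(n : ℝ) ^ m = (n : ℝ) ^ ((m : ℝ) / 2) := by
    rw [Real.sqrt_eq_rpow, ← Real.rpow_mul_natCast n.cast_nonneg, one_div_mul_eq_div]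
  rw [Measure.integral_comp_smul, Module.finrank_fin_fun, inv_pow, inv_inv, hpow,
    abs_of_nonneg (by positivity), Complex.real_smul]

lemma integral_cexp_inv_sqrt_smul_mul_gaussCharFun {S : Matrix (Fin m) (Fin m) ℝ} (hS : S.PosDef)
    {n : ℕ} (hn : n ≠ 0) (w : Fin m → ℝ) :
    ∫ t, Complex.exp (-((√n)⁻¹ • t ⬝ᵥ w : ℝ) * Complex.I) * gaussCharFun S t =
      ((2 * Real.pi) ^ m * ((n : ℝ) ^ ((m : ℝ) / 2) * gauss ((n : ℝ) • S) w) : ℝ) := by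
  have hn0 : (0 : ℝ) < n := Nat.cast_pos.2 hn.bot_lt
  have hscale (t : Fin m → ℝ) :
      gaussCharFun S t = gaussCharFun ((n : ℝ) • S) ((√(n : ℝ))⁻¹ • t) := by
    have hsq : (√(n : ℝ))⁻¹ * n * (√(n : ℝ))⁻¹ = 1 := by
      rw [mul_right_comm, ← sq, inv_pow, Real.sq_sqrt hn0.le, inv_mul_cancel₀ hn0.ne']
    rw [gaussCharFun, gaussCharFun, smul_mulVec, mulVec_smul, smul_dotProduct, dotProduct_smul,
      dotProduct_smul, smul_smul, smul_smul, hsq, one_smul]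
  simp_rw [hscale]
  rw [integral_comp_inv_sqrt_smul n fun v =>
      Complex.exp (-(v ⬝ᵥ w : ℝ) * Complex.I) * gaussCharFun ((n : ℝ) • S) v,
    integral_cexp_mul_gaussCharFun (hS.smul hn0), ← Complex.ofReal_mul, mul_left_comm]

lemma integrable_exp_neg_mul_sum_sq {ι : Type*} [Fintype ι] {κ : ℝ} (hκ : 0 < κ) :
    Integrable fun t : ι → ℝ => Real.exp (-(κ * ∑ i, t i ^ 2)) := by
  have hprod := Integrable.fintype_prod (f := fun (_ : ι) (t : ℝ) => Real.exp (-κ * t ^ 2))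
    (μ := fun _ => volume) fun _ => integrable_exp_neg_mul_sq hκ
  simpa only [← Real.exp_sum, ← Finset.mul_sum, neg_mul, Finset.sum_neg_distrib,
    ← volume_pi] using hprod

variable (ψ : Λ ≃* Multiplicative (Fin m → ℤ)) (R : RepSystem Λ) (μ : Γ → ℝ)

/-- The matrix entry of the `n`-th power of `scaledOp` at frequency `t`, truncated to the
frequencies that rescale into the fundamental domain `cube m`. -/
noncomputable def scaledFourier (x y : R.Δ) (n : ℕ) : (Fin m → ℝ) → ℂ :=
  ((fun t => (√(n : ℝ))⁻¹ • t) ⁻¹' cube m).indicator fun t =>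
    (scaledOp ψ R μ n t ^ n) (Pi.single y 1) x

/-- The deviation of `Φ γ` from its mean after `n` steps. -/
noncomputable def deviation (n : ℕ) (γ : Γ) (i : Fin m) : ℝ := Phi ψ R γ i - n * drift ψ R μ i

variable {ψ R μ}

-- Instance search for `smul_pow` fails on concrete function spaces.
lemma continuousLinearMap_smul_pow {E : Type*} [NormedAddCommGroup E] [NormedSpace ℂ E] (c : ℂ)
    (T : E →L[ℂ] E) (k : ℕ) : (c • T) ^ k = c ^ k • T ^ k :=
  smul_pow c T k

lemma scaledOp_pow (hμ : Summable μ) (hμ0 : 0 ≤ μ) (n k : ℕ) (t : Fin m → ℝ) :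
    scaledOp ψ R μ n t ^ k =
      Complex.exp (-(k * ((√n)⁻¹ * (t ⬝ᵥ drift ψ R μ)) : ℝ) * Complex.I) •
        fourierOp ψ R (convPow μ k) ((√n)⁻¹ • t) := by
  rw [scaledOp, continuousLinearMap_smul_pow, ← fourierOp_convPow ψ R hμ hμ0, ← Complex.exp_nat_mul,
    Complex.ofReal_mul (k : ℝ), Complex.ofReal_natCast, ← mul_neg, mul_assoc]

lemma measurable_scaledFourier (hμ : IsProb μ) (x y : R.Δ) (n : ℕ) :
    Measurable (scaledFourier ψ R μ x y n) := by
  refine Measurable.indicator ?_ (measurable_const_smul _ measurableSet_cube)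
  simp_rw [scaledOp_pow hμ.2.summable hμ.1]
  have hμn := hμ.convPow n
  refine Continuous.measurable (Continuous.mul ?_ ((continuous_fourierOp_apply ψ R hμn.2.summable
    hμn.1 _ x).comp (continuous_const_smul _)))
  simp only [dotProduct]
  fun_prop

lemma exists_norm_scaledFourier_le (hμ : IsProb μ) (hnd : Nondeg μ) (hap : Aperiodic μ) :
    ∃ C κ : ℝ, 0 < κ ∧ ∀ n ≠ 0, ∀ (x y : R.Δ) (t : Fin m → ℝ),
      ‖scaledFourier ψ R μ x y n t‖ ≤ C * Real.exp (-(κ * ∑ i, t i ^ 2)) := by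
  obtain ⟨C, κ, hκ, hC⟩ := exists_norm_fourierOp_pow_le ψ R hμ hnd hap
  refine ⟨|C|, κ, hκ, fun n hn x y t => ?_⟩
  rw [scaledFourier, norm_indicator_eq_indicator_norm]
  refine Set.indicator_apply_le' (fun ht => ?_) fun _ => by positivity
  have hn0 : (n : ℝ) ≠ 0 := Nat.cast_ne_zero.2 hn
  have hsq : (n : ℝ) * ∑ i, ((√(n : ℝ))⁻¹ • t) i ^ 2 = ∑ i, t i ^ 2 := by
    simp only [Pi.smul_apply, smul_eq_mul, mul_pow, ← Finset.mul_sum, inv_pow,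
      Real.sq_sqrt n.cast_nonneg, mul_inv_cancel_left₀ hn0]
  have hcube (i : Fin m) : |((√(n : ℝ))⁻¹ • t) i| ≤ Real.pi :=
    abs_le.2 ⟨(ht i (Set.mem_univ i)).1.le, (ht i (Set.mem_univ i)).2⟩
  calc ‖(scaledOp ψ R μ n t ^ n) (Pi.single y 1) x‖
      ≤ ‖(scaledOp ψ R μ n t ^ n) (Pi.single y 1)‖ := norm_le_pi_norm _ x
    _ ≤ ‖scaledOp ψ R μ n t ^ n‖ * ‖(Pi.single y 1 : R.Δ → ℂ)‖ :=
        ContinuousLinearMap.le_opNorm _ _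
    _ = ‖fourierOp ψ R μ ((√(n : ℝ))⁻¹ • t) ^ n‖ := by
        rw [Pi.norm_single, norm_one, mul_one, scaledOp_pow hμ.2.summable hμ.1, norm_smul,
          norm_cexp_neg_mul_I, one_mul, fourierOp_convPow ψ R hμ.2.summable hμ.1]
    _ ≤ C * Real.exp (-(κ * ∑ i, t i ^ 2)) := hsq ▸ hC n _ hcube
    _ ≤ |C| * Real.exp (-(κ * ∑ i, t i ^ 2)) := by gcongr; exact le_abs_self C

lemma integrable_scaledFourier (hμ : IsProb μ) (hnd : Nondeg μ) (hap : Aperiodic μ) (x y : R.Δ)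
    {n : ℕ} (hn : n ≠ 0) : Integrable (scaledFourier ψ R μ x y n) := by
  obtain ⟨C, κ, hκ, hC⟩ := exists_norm_scaledFourier_le (ψ := ψ) (R := R) hμ hnd hap
  exact ((integrable_exp_neg_mul_sum_sq hκ).const_mul C).mono'
    (measurable_scaledFourier hμ x y n).aestronglyMeasurable (Eventually.of_forall (hC n hn x y))

variable [Countable Γ]

lemma tendsto_scaledFourier (hμ : IsProb μ) (hnd : Nondeg μ) (hap : Aperiodic μ)
    (hmom : FinSecondMoment μ) {g : R.Δ → Fin m → ℝ} (hg : IsCorrector ψ R μ g) (x y : R.Δ)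
    (t : Fin m → ℝ) :
    Tendsto (fun n => scaledFourier ψ R μ x y n t) atTop
      (𝓝 ((Fintype.card R.Δ : ℂ)⁻¹ * gaussCharFun (covMat ψ R μ g) t)) := by
  refine (tendsto_scaledOp_pow_apply_single hμ hnd hap hmom hg t x y).congr' ?_
  have ht : Tendsto (fun n : ℕ => (√(n : ℝ))⁻¹ • t) atTop (𝓝 0) := by
    simpa using tendsto_inv_sqrt_natCast.smul_const t
  filter_upwards [ht.eventually cube_mem_nhds_zero] with n hn
  rw [scaledFourier, Set.indicator_of_mem (Set.mem_preimage.2 hn)]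

lemma tendsto_integral_norm_scaledFourier_sub (hμ : IsProb μ) (hnd : Nondeg μ)
    (hap : Aperiodic μ) (hmom : FinSecondMoment μ) {g : R.Δ → Fin m → ℝ}
    (hg : IsCorrector ψ R μ g) (x y : R.Δ) :
    Tendsto (fun n => ∫ t, ‖scaledFourier ψ R μ x y n t -
      (Fintype.card R.Δ : ℂ)⁻¹ * gaussCharFun (covMat ψ R μ g) t‖) atTop (𝓝 0) := by
  obtain ⟨C, κ, hκ, hC⟩ := exists_norm_scaledFourier_le (ψ := ψ) (R := R) hμ hnd hap
  have hgauss := (integrable_gaussCharFun (covMat_posDef (ψ := ψ) hμ hnd hap hmom g)).const_mul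
    (Fintype.card R.Δ : ℂ)⁻¹
  set L : (Fin m → ℝ) → ℂ := fun t =>
    (Fintype.card R.Δ : ℂ)⁻¹ * gaussCharFun (covMat ψ R μ g) t
  rw [← integral_zero (Fin m → ℝ) ℝ]
  refine tendsto_integral_filter_of_dominated_convergence
    (fun t => C * Real.exp (-(κ * ∑ i, t i ^ 2)) + ‖L t‖)
    (Eventually.of_forall fun n => ?_) ?_
    (((integrable_exp_neg_mul_sum_sq hκ).const_mul C).add hgauss.norm)
    (Eventually.of_forall fun t => ?_)
  · exact ((measurable_scaledFourier hμ x y n).aestronglyMeasurable.sub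
      hgauss.aestronglyMeasurable).norm
  · filter_upwards [eventually_ne_atTop 0] with n hn
    refine Eventually.of_forall fun t => ?_
    rw [norm_norm]
    exact (norm_sub_le _ _).trans (add_le_add_left (hC n hn x y t) _)
  · exact tendsto_iff_norm_sub_tendsto_zero.1 (tendsto_scaledFourier hμ hnd hap hmom hg x y t)

lemma integral_cexp_mul_scaledFourier (hμ : IsProb μ) (n : ℕ) (γ : Γ) :
    ∫ t, Complex.exp (-((√n)⁻¹ • t ⬝ᵥ deviation ψ R μ n γ : ℝ) * Complex.I) *
        scaledFourier ψ R μ R.base (R.act R.base γ) n t =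
      ((2 * Real.pi) ^ m * ((n : ℝ) ^ ((m : ℝ) / 2) * convPow μ n γ) : ℝ) := by
  have hμn := hμ.convPow n
  set F : (Fin m → ℝ) → ℂ := (cube m).indicator fun v =>
    Complex.exp (-(v ⬝ᵥ fun i => (Phi ψ R γ i : ℝ) : ℝ) * Complex.I) *
      fourierOp ψ R (convPow μ n) v (Pi.single (R.act R.base γ) 1) R.base with hF
  have hcomp (t : Fin m → ℝ) :
      Complex.exp (-((√n)⁻¹ • t ⬝ᵥ deviation ψ R μ n γ : ℝ) * Complex.I) *
        scaledFourier ψ R μ R.base (R.act R.base γ) n t = F ((√(n : ℝ))⁻¹ • t) := by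
    have hphase : ((√(n : ℝ))⁻¹ • t ⬝ᵥ fun i => (Phi ψ R γ i : ℝ)) =
        (√(n : ℝ))⁻¹ • t ⬝ᵥ deviation ψ R μ n γ + n * ((√(n : ℝ))⁻¹ * (t ⬝ᵥ drift ψ R μ)) := by
      have hsplit : (fun i => (Phi ψ R γ i : ℝ)) =
          deviation ψ R μ n γ + (n : ℝ) • drift ψ R μ :=
        funext fun i => (sub_add_cancel _ _).symm
      rw [hsplit, dotProduct_add, dotProduct_smul, smul_dotProduct _ t (drift ψ R μ), smul_eq_mul,
        smul_eq_mul]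
    by_cases ht : (√(n : ℝ))⁻¹ • t ∈ cube m
    · rw [hF, scaledFourier, Set.indicator_of_mem (Set.mem_preimage.2 ht),
        Set.indicator_of_mem ht, scaledOp_pow hμ.2.summable hμ.1, _root_.smul_apply,
        Pi.smul_apply, smul_eq_mul, ← mul_assoc, ← Complex.exp_add, ← add_mul, hphase,
        Complex.ofReal_add, neg_add]
    · rw [hF, scaledFourier, Set.indicator_of_notMem (mt Set.mem_preimage.1 ht),
        Set.indicator_of_notMem ht, mul_zero]
  simp_rw [hcomp]
  rw [integral_comp_inv_sqrt_smul, integral_indicator measurableSet_cube,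
    setIntegral_cube_fourierOp ψ R hμn.2.summable hμn.1, ← Complex.ofReal_mul, mul_left_comm]

lemma rpow_mul_abs_convPow_sub_le (hμ : IsProb μ) (hnd : Nondeg μ) (hap : Aperiodic μ)
    {S : Matrix (Fin m) (Fin m) ℝ} (hS : S.PosDef) {n : ℕ} (hn : n ≠ 0) (γ : Γ) :
    (2 * Real.pi) ^ m * ((n : ℝ) ^ ((m : ℝ) / 2) *
      |convPow μ n γ - (Fintype.card R.Δ : ℝ)⁻¹ * gauss ((n : ℝ) • S) (deviation ψ R μ n γ)|) ≤
      ∫ t, ‖scaledFourier ψ R μ R.base (R.act R.base γ) n t -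
        (Fintype.card R.Δ : ℂ)⁻¹ * gaussCharFun S t‖ := by
  set E : (Fin m → ℝ) → ℂ := fun t =>
    Complex.exp (-((√n)⁻¹ • t ⬝ᵥ deviation ψ R μ n γ : ℝ) * Complex.I) with hE
  have hE_norm (t : Fin m → ℝ) : ‖E t‖ = 1 := norm_cexp_neg_mul_I _
  have hE_meas : AEStronglyMeasurable E := by
    refine Continuous.aestronglyMeasurable ?_
    simp only [hE, dotProduct, Pi.smul_apply]
    fun_prop
  have hintegral :
      ∫ t, E t * (scaledFourier ψ R μ R.base (R.act R.base γ) n t -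
        (Fintype.card R.Δ : ℂ)⁻¹ * gaussCharFun S t) =
      ((2 * Real.pi) ^ m * ((n : ℝ) ^ ((m : ℝ) / 2) * (convPow μ n γ -
        (Fintype.card R.Δ : ℝ)⁻¹ * gauss ((n : ℝ) • S) (deviation ψ R μ n γ))) : ℝ) := by
    simp_rw [mul_sub, mul_left_comm (E _)]
    rw [integral_sub
        ((integrable_scaledFourier hμ hnd hap _ _ hn).bdd_mul hE_meas
          (Eventually.of_forall fun t => (hE_norm t).le))
        (((integrable_gaussCharFun hS).bdd_mul hE_meas
          (Eventually.of_forall fun t => (hE_norm t).le)).const_mul _),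
      integral_const_mul, integral_cexp_mul_scaledFourier hμ,
      integral_cexp_inv_sqrt_smul_mul_gaussCharFun hS hn]
    push_cast
    ring
  calc _ = ‖∫ t, E t * (scaledFourier ψ R μ R.base (R.act R.base γ) n t -
        (Fintype.card R.Δ : ℂ)⁻¹ * gaussCharFun S t)‖ := by
        rw [hintegral, Complex.norm_real, norm_mul, norm_mul, Real.norm_of_nonneg (by positivity),
          Real.norm_of_nonneg (by positivity), Real.norm_eq_abs]
    _ ≤ _ := (norm_integral_le_integral_norm _).trans_eq (by simp_rw [norm_mul, hE_norm, one_mul])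

end LocalLimit

theorem local_clt_aperiodic_general {Γ : Type*} [Group Γ] {Λ : Subgroup Γ} {m : ℕ}
    (ψ : Λ ≃* Multiplicative (Fin m → ℤ)) (R : RepSystem Λ) (μ : Γ → ℝ) (hμ : IsProb μ)
    (hnd : Nondeg μ) (hap : Aperiodic μ) (hmom : FinSecondMoment μ) :
    ∃ Sig : Matrix (Fin m) (Fin m) ℝ, Sig.IsSymm ∧ Sig.PosDef ∧
      (∀ (v₁ v₂ : Fin m → ℝ) (u₁ u₂ : Γ → Γ → ℝ) (f₁ f₂ : Γ → ℝ),
        IsHarmDecomp R μ (vhat ψ R v₁) u₁ f₁ → IsHarmDecomp R μ (vhat ψ R v₂) u₂ f₂ →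
        v₁ ⬝ᵥ Sig.mulVec v₂ = cov R μ u₁ u₂) ∧
      (∀ ε : ℝ, 0 < ε → ∃ N : ℕ, ∀ n : ℕ, N ≤ n → ∀ γ : Γ,
        (n : ℝ) ^ ((m : ℝ) / 2) *
          |convPow μ n γ - (Λ.index : ℝ)⁻¹ *
            gauss ((n : ℝ) • Sig) (fun i => (Phi ψ R γ i : ℝ) - n * drift ψ R μ i)| ≤ ε) := by
  have : Countable Γ := (injective_act_base_Phi ψ R).countable
  obtain ⟨g, hg⟩ := exists_isCorrector (ψ := ψ) (R := R) hμ hnd hap hmom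
  have hpos := covMat_posDef (ψ := ψ) hμ hnd hap hmom g
  refine ⟨covMat ψ R μ g, covMat_isSymm g, hpos, fun v₁ v₂ u₁ u₂ f₁ f₂ hu₁ hu₂ =>
    dotProduct_covMat_mulVec_eq_cov hμ hnd hap hmom hg hu₁ hu₂, fun ε hε => ?_⟩
  have htorus : (0 : ℝ) < (2 * Real.pi) ^ m := by positivity
  have hL1 := eventually_all.2 fun y =>
    (tendsto_integral_norm_scaledFourier_sub hμ hnd hap hmom hg R.base y).eventually_le_const
      (mul_pos htorus hε)
  obtain ⟨N, hN⟩ := eventually_atTop.1 (hL1.and (eventually_ne_atTop 0))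
  refine ⟨N, fun n hn γ => le_of_mul_le_mul_left ?_ htorus⟩
  rw [← R.card_eq_index]
  exact (rpow_mul_abs_convPow_sub_le hμ hnd hap hpos (hN n hn).2 γ).trans ((hN n hn).1 _)

/-- Local CLT (aperiodic case): there is a symmetric positive-definite
covariance matrix `Σ`, given on harmonic parts by the covariance pairing, such that
`sup_γ n^{m/2}·|μ_n(γ) − (1/#F)·ξ_{nΣ}(Φ(γ) − nζ)| → 0`. -/
theorem local_clt_aperiodic
    {Γ : Type*} [Group Γ] [Countable Γ] {Λ : Subgroup Γ} (hN : Λ.Normal)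
    (hI : Λ.index ≠ 0) {m : ℕ} (hm : 1 ≤ m) (ψ : Λ ≃* Multiplicative (Fin m → ℤ))
    (R : RepSystem Λ) (μ : Γ → ℝ) (hμ : IsProb μ) (hnd : Nondeg μ) (hap : Aperiodic μ)
    (hmom : FinSecondMoment μ) :
    ∃ Sig : Matrix (Fin m) (Fin m) ℝ, Sig.IsSymm ∧ Sig.PosDef ∧
      (∀ (v₁ v₂ : Fin m → ℝ) (u₁ u₂ : Γ → Γ → ℝ) (f₁ f₂ : Γ → ℝ),
        IsHarmDecomp R μ (vhat ψ R v₁) u₁ f₁ → IsHarmDecomp R μ (vhat ψ R v₂) u₂ f₂ →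
        v₁ ⬝ᵥ Sig.mulVec v₂ = cov R μ u₁ u₂) ∧
      (∀ ε : ℝ, 0 < ε → ∃ N : ℕ, ∀ n : ℕ, N ≤ n → ∀ γ : Γ,
        (n : ℝ) ^ ((m : ℝ) / 2) *
          |convPow μ n γ - (Λ.index : ℝ)⁻¹ *
            gauss ((n : ℝ) • Sig) (fun i => (Phi ψ R γ i : ℝ) - n * drift ψ R μ i)| ≤ ε) :=
  local_clt_aperiodic_general ψ R μ hμ hnd hap hmom

end NSVA
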